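/- $\sum_{n=1}^{\infty} \frac{(-1)^n}{n^3 \binom{2n}{n}}\left(10 \sum_{j=1}^{n} \frac{(-1)^j}{j^2} - \frac{(-1)^n}{n^2}\right) = \frac{29\,\zeta(5)}{6} - \frac{\pi^2 \zeta(3)}{18}$. -/

import Mathlib

open Filter Topology

/-- Alternating harmonic-type sum `∑_{j=1}^n (-1)^j / j^s`. -/
noncomputable def A (s n : ℕ) : ℝ := ∑ j ∈ Finset.range n, (-1:ℝ)^(j+1) / ((j:ℝ) + 1) ^ s

/-- The Riemann zeta value `ζ(s) = ∑_{n ≥ 1} 1/n^s`. -/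
noncomputable def zeta (s : ℕ) : ℝ := ∑' n : ℕ, 1 / ((n:ℝ) + 1) ^ s

open Filter Topology
namespace Z11

/-- summand of the auxiliary finite sum -/
noncomputable def w (N k : ℕ) : ℝ :=
  (-1:ℝ)^k * ((k+1).factorial:ℝ)^2 * ((N-k-1).factorial:ℝ) / (((k:ℝ)+1)^3 * ((N+k+1).factorial:ℝ))

noncomputable def W (N : ℕ) : ℝ := ∑ k ∈ Finset.range N, w N k

noncomputable def U (N j : ℕ) : ℝ :=
  (-1:ℝ)^j * (j.factorial:ℝ)^2 * ((N-j).factorial:ℝ) / (((N:ℝ)+1)^2 * ((N+1+j).factorial:ℝ))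

lemma w_diff (N k : ℕ) (h : k < N) : w (N+1) k - w N k = 2 * (U N (k+1) - U N k) := by
  obtain ⟨d, rfl⟩ := Nat.exists_eq_add_of_lt h
  unfold w U
  have e1 : k + d + 1 + 1 - k - 1 = d + 1 := by omega
  have e2 : k + d + 1 - k - 1 = d := by omega
  have e3 : k + d + 1 - (k+1) = d := by omega
  have e4 : k + d + 1 - k = d + 1 := by omega
  have e5 : k + d + 1 + 1 + k + 1 = (2*k+d+2)+1 := by omega
  have e6 : k + d + 1 + k + 1 = 2*k+d+2 := by omega
  have e7 : k + d + 1 + 1 + (k+1) = (2*k+d+2)+1 := by omega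
  have e8 : k + d + 1 + 1 + k = 2*k+d+2 := by omega
  rw [e1, e2, e3, e4, e5, e6, e7, e8]
  have f1 : ((2*k+d+2).factorial:ℝ) ≠ 0 := by positivity
  have f2 : (k.factorial:ℝ) ≠ 0 := by positivity
  have f3 : (d.factorial:ℝ) ≠ 0 := by positivity
  have f4 : ((k:ℝ)+d+1+1) ≠ 0 := by positivity
  have f5 : (2*(k:ℝ)+d+2+1) ≠ 0 := by positivity
  simp only [Nat.factorial_succ, Nat.cast_mul, Nat.cast_add, Nat.cast_one, Nat.cast_ofNat, pow_succ] at f1 ⊢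
  generalize ((-1:ℝ)^k) = s
  field_simp
  ring

lemma W_succ (N : ℕ) : W (N+1) - W N =
    5 * (-1:ℝ)^N / (((N:ℝ)+1)^3 * ((2*(N+1)).choose (N+1) : ℝ)) - 2 / ((N:ℝ)+1)^3 := by
  unfold W
  rw [Finset.sum_range_succ]
  have h1 : ∑ k ∈ Finset.range N, w (N+1) k - ∑ k ∈ Finset.range N, w N k = 2 * (U N N - U N 0) := by
    rw [← Finset.sum_sub_distrib, ← Finset.sum_range_sub, Finset.mul_sum]
    exact Finset.sum_congr rfl fun k hk => w_diff N k (Finset.mem_range.mp hk)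
  have h2 : ((2*(N+1)).choose (N+1) : ℝ) = ((2*N+2).factorial : ℝ) / ((N+1).factorial:ℝ)^2 := by
    rw [Nat.cast_choose ℝ (by omega : N+1 ≤ 2*(N+1))]
    have : 2*(N+1) - (N+1) = N+1 := by omega
    rw [this, sq]; rfl
  have h3 : U N N = (-1:ℝ)^N * (N.factorial:ℝ)^2 / (((N:ℝ)+1)^2 * ((2*N+1).factorial:ℝ)) := by
    unfold U
    rw [show N + 1 + N = 2*N+1 by ring]; simp
  have h4 : U N 0 = 1/((N:ℝ)+1)^3 := by
    unfold U
    have : (N.factorial:ℝ) ≠ 0 := by positivity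
    simp [Nat.factorial_succ]
    field_simp
  have h5 : w (N+1) N = (-1:ℝ)^N * ((N+1).factorial:ℝ)^2 / (((N:ℝ)+1)^3 * ((2*N+2).factorial:ℝ)) := by
    unfold w
    rw [show N + 1 + N + 1= 2*N+2 by ring]; simp
  have : ∑ k ∈ Finset.range N, w (N+1) k + w (N+1) N - ∑ k ∈ Finset.range N, w N k
    = 2 * (U N N - U N 0) + w (N+1) N := by linarith
  rw [this, h3, h4, h5, h2]
  have f1 : ((2*N).factorial:ℝ) ≠ 0 := by positivity
  have f2 : (N.factorial:ℝ) ≠ 0 := by positivity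
  simp only [Nat.factorial_succ, Nat.cast_mul, Nat.cast_add, Nat.cast_one, Nat.cast_ofNat]
  generalize ((-1:ℝ)^N) = s
  field_simp
  ring

/-- finite WZ identity -/
lemma P_eq (N : ℕ) : ∑ n ∈ Finset.range N, (-1:ℝ)^(n+1) / (((n:ℝ)+1)^3 * ((2*(n+1)).choose (n+1) : ℝ))
    = -(2/5) * (∑ n ∈ Finset.range N, 1/((n:ℝ)+1)^3 + 1/2 * W N) := by
  induction N with
  | zero => simp [W]
  | succ N ih =>
    rw [Finset.sum_range_succ, Finset.sum_range_succ, ih]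
    have := W_succ N
    have h : W (N+1) = W N + (5 * (-1:ℝ)^N / (((N:ℝ)+1)^3 * ((2*(N+1)).choose (N+1) : ℝ)) - 2 / ((N:ℝ)+1)^3) := by
      linarith
    rw [h]; ring

lemma w_bound (N k : ℕ) (h : k < N) : |w N k| ≤ 1 / (((k:ℝ)+1)^3 * ((N:ℝ)+1)) := by
  obtain ⟨d, rfl⟩ := Nat.exists_eq_add_of_lt h
  unfold w
  rw [show k + d + 1 - k - 1 = d by omega, show k + d + 1 + k + 1 = (k+d+1)+(k+1) by omega]
  rw [abs_div, abs_mul, abs_mul, abs_pow, abs_neg, abs_one, one_pow, one_mul]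
  rw [abs_of_nonneg (by positivity), abs_of_nonneg (by positivity), abs_of_pos (by positivity)]
  rw [div_le_div_iff₀ (by positivity) (by positivity)]
  have a1 : ((k+1).factorial * d.factorial) ≤ (k+d+1).factorial := by
    have := Nat.factorial_mul_factorial_dvd_factorial_add (k+1) d
    rw [show k+1+d = k+d+1 by ring] at this
    exact Nat.le_of_dvd (Nat.factorial_pos _) this
  have a2 : (k+1).factorial * (k+d+1).factorial * (k+d+1+1) ≤ ((k+d+1)+(k+1)).factorial := by
    have h1 := Nat.add_choose_mul_factorial_mul_factorial (k+d+1) (k+1)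
    have h2 : k+d+1+1 ≤ ((k+d+1)+(k+1)).choose (k+d+1) := by
      calc k+d+1+1 = (k+d+1+1).choose (k+d+1) := by simp
        _ ≤ _ := Nat.choose_le_choose _ (by omega)
    calc _ = (k+d+1+1) * (k+d+1).factorial * (k+1).factorial := by ring
      _ ≤ _ := by rw [← h1]; gcongr; exact h2.trans (Nat.choose_symm_add).le
  have a3 : (k+1).factorial ^2 * d.factorial * (k+d+1+1) ≤ ((k+d+1)+(k+1)).factorial := by
    calc _ = (k+1).factorial * ((k+1).factorial * d.factorial) * (k+d+1+1) := by ring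
      _ ≤ (k+1).factorial * (k+d+1).factorial * (k+d+1+1) := by gcongr
      _ ≤ _ := a2
  have a4 : ((k+1).factorial:ℝ) ^2 * d.factorial * (k+d+1+1) ≤ (((k+d+1)+(k+1)).factorial:ℝ) := by
    exact_mod_cast a3
  push_cast
  calc _ = ((k:ℝ)+1)^3 * (((k+1).factorial:ℝ) ^2 * d.factorial * (k+d+1+1)) := by ring
    _ ≤ ((k:ℝ)+1)^3 * (((k+d+1)+(k+1)).factorial:ℝ) := by gcongr
    _ = _ := by ring

lemma summable_zeta (s : ℕ) (hs : 2 ≤ s) : Summable (fun n : ℕ => 1/((n:ℝ)+1)^s) := by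
  have := (summable_nat_add_iff 1).mpr (Real.summable_one_div_nat_pow.mpr (by omega : 1 < s))
  simpa using this

lemma hasSum_zeta (s : ℕ) (hs : 2 ≤ s) : HasSum (fun n : ℕ => 1/((n:ℝ)+1)^s) (zeta s) :=
  (summable_zeta s hs).hasSum

lemma W_tendsto : Tendsto W atTop (𝓝 0) := by
  have hb : ∀ N, |W N| ≤ zeta 3 * (1/((N:ℝ)+1)) := by
    intro N
    calc |W N| ≤ ∑ k ∈ Finset.range N, |w N k| := Finset.abs_sum_le_sum_abs _ _
      _ ≤ ∑ k ∈ Finset.range N, 1/((k:ℝ)+1)^3 * (1/((N:ℝ)+1)) := by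
        refine Finset.sum_le_sum fun k hk => (w_bound N k (Finset.mem_range.mp hk)).trans (le_of_eq ?_)
        field_simp
      _ = (∑ k ∈ Finset.range N, 1/((k:ℝ)+1)^3) * (1/((N:ℝ)+1)) := by rw [Finset.sum_mul]
      _ ≤ _ := by
        gcongr
        exact (summable_zeta 3 (by norm_num)).sum_le_tsum _ (fun i _ => by positivity)
  refine squeeze_zero_norm hb ?_
  simpa using tendsto_one_div_add_atTop_nhds_zero_nat.const_mul (zeta 3)

end Z11
open Filter Topology
namespace Z11

lemma hs_congr {ι : Type*} {f g : ι → ℝ} {a b : ℝ} (h : HasSum f a) (hf : ∀ i, g i = f i) (hab : b = a) :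
    HasSum g b := by
  rw [hab, funext hf]; exact h

noncomputable def al (n : ℕ) : ℝ := (-1:ℝ)^(n+1) / ((n:ℝ)+1)^2
noncomputable def cc (n : ℕ) : ℝ := ((2*(n+1)).choose (n+1) : ℝ)
noncomputable def H3 (N : ℕ) : ℝ := ∑ n ∈ Finset.range N, 1/((n:ℝ)+1)^3

lemma cc_ge (n : ℕ) : (2:ℝ)^(n+1) ≤ cc n := by
  unfold cc
  have := Nat.four_pow_le_two_mul_self_mul_centralBinom
  have h : ∀ m : ℕ, 2^m ≤ Nat.centralBinom m := by
    intro m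
    induction m with
    | zero => simp
    | succ m ih =>
      have h1 := Nat.succ_mul_centralBinom_succ m
      have h2 : (m+1) * (2^(m+1)) ≤ (m+1) * Nat.centralBinom (m+1) := by
        rw [h1, pow_succ]
        calc (m+1) * (2^m*2) = 2 * (m+1) * 2^m := by ring
          _ ≤ 2 * (2*m+1) * Nat.centralBinom m := by gcongr; omega
      exact Nat.le_of_mul_le_mul_left h2 (by omega)
  exact_mod_cast h (n+1)

lemma cc_pos (n : ℕ) : 0 < cc n := lt_of_lt_of_le (by positivity) (cc_ge n)

lemma cc_ge_one (n : ℕ) : 1 ≤ cc n := le_trans (one_le_pow₀ (by norm_num)) (cc_ge n)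

lemma hasSum_alt (s : ℕ) (hs : 2 ≤ s) :
    HasSum (fun n : ℕ => (-1:ℝ)^(n+1) / ((n:ℝ)+1)^s) (-(1 - 2/2^s) * zeta s) := by
  have h0 := hasSum_zeta s hs
  set f : ℕ → ℝ := fun n => 1/((n:ℝ)+1)^s with hf
  have hodd : HasSum (fun j : ℕ => f (2*j+1)) (1/2^s * zeta s) := by
    refine hs_congr (h0.mul_left (1/2^s)) (fun j => ?_) rfl
    simp only [hf]
    push_cast
    rw [show (2*(j:ℝ)+1+1) = 2 * (j+1) by ring, mul_pow]
    field_simp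
  have hev : Summable (fun j : ℕ => f (2*j)) :=
    h0.summable.comp_injective (mul_right_injective₀ (by norm_num : (2:ℕ) ≠ 0))
  have h1 := hev.hasSum.even_add_odd hodd
  have h2 := h1.unique h0
  have h3 : HasSum (fun n : ℕ => (-1:ℝ)^(n+1) / ((n:ℝ)+1)^s) (-(∑' j, f (2*j)) + 1/2^s * zeta s) := by
    apply HasSum.even_add_odd
    · refine hs_congr hev.hasSum.neg (fun j => ?_) rfl
      simp [hf, pow_succ, pow_mul, neg_div]
    · refine hs_congr hodd (fun j => ?_) rfl
      simp [hf, pow_succ, pow_mul]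
  convert h3 using 1
  have : ∑' j, f (2*j) = zeta s - 1/2^s * zeta s := by linarith
  rw [this]; ring

lemma zeta_two : zeta 2 = Real.pi^2/6 := by
  have h := (hasSum_nat_add_iff' 1).mpr hasSum_zeta_two
  have h2 := hasSum_zeta 2 le_rfl
  refine h2.unique ?_
  refine hs_congr h (fun n => ?_) ?_
  · simp
  · simp

noncomputable def g5 : ℝ := ∑' n : ℕ, 1/(((n:ℝ)+1)^5 * cc n)

lemma hasSum_g5 : HasSum (fun n : ℕ => 1/(((n:ℝ)+1)^5 * cc n)) g5 := by
  apply Summable.hasSum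
  refine Summable.of_nonneg_of_le (fun n => by have := cc_pos n; positivity) (fun n => ?_) (summable_zeta 5 (by norm_num))
  have := cc_ge_one n
  apply one_div_le_one_div_of_le (by positivity)
  nlinarith [pow_pos (by positivity : (0:ℝ) < n+1) 5]

noncomputable def vv (p : ℕ × ℕ) : ℝ :=
  ((p.1+1).factorial:ℝ)^2 * (p.2.factorial:ℝ) /
    (((p.1:ℝ)+1)^3 * ((p.1:ℝ)+p.2+1)^2 * ((2*p.1+p.2+2).factorial:ℝ))

lemma vv_nonneg (p : ℕ × ℕ) : 0 ≤ vv p := by unfold vv; positivity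

lemma al_mul_w (k m : ℕ) : al (k+m) * w (k+m+1) k = - ((-1)^m * vv (k,m)) := by
  unfold al w vv
  rw [show k+m+1-k-1 = m by omega, show k+m+1+k+1 = 2*k+m+2 by ring]
  push_cast
  have : (-1:ℝ)^(k+m+1) * (-1)^k = - (-1)^m := by
    rw [pow_succ, pow_add]
    have : (-1:ℝ)^k * (-1)^k = 1 := by rw [← mul_pow]; simp
    linear_combination (-(-1)^m) * this
  rw [div_mul_div_comm]
  rw [show (-1:ℝ)^(k+m+1) * ((-1)^k * ((k+1).factorial:ℝ)^2 * (m.factorial:ℝ)) = ((-1:ℝ)^(k+m+1) * (-1)^k) * (((k+1).factorial:ℝ)^2 * (m.factorial:ℝ)) by ring, this]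
  rw [← mul_div_assoc, ← neg_div]
  congr 1 <;> ring

lemma summable_vv : Summable vv := by
  have hs := summable_zeta 2 le_rfl
  have := hs.mul_of_nonneg hs (fun n => by positivity) (fun n => by positivity)
  refine Summable.of_nonneg_of_le vv_nonneg ?_ this
  rintro ⟨k, m⟩
  have h1 : vv (k,m) = |al (k+m) * w (k+m+1) k| := by
    rw [al_mul_w, abs_neg, abs_mul, abs_pow, abs_neg, abs_one, one_pow, one_mul, abs_of_nonneg (vv_nonneg _)]
  rw [h1, abs_mul]
  have h2 := w_bound (k+m+1) k (by omega)
  have h3 : |al (k+m)| ≤ 1/((m:ℝ)+1)^2 := by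
    unfold al
    rw [abs_div, abs_pow, abs_neg, abs_one, one_pow, abs_of_nonneg (by positivity)]
    push_cast
    apply one_div_le_one_div_of_le (by positivity)
    gcongr; linarith [(Nat.cast_nonneg k : (0:ℝ) ≤ k)]
  have h4 : 1 / (((k:ℝ)+1)^3 * ((((k+m+1:ℕ):ℝ))+1)) ≤ 1/((k:ℝ)+1)^2 := by
    apply one_div_le_one_div_of_le (by positivity)
    have : (1:ℝ) ≤ k+1 := by linarith [(Nat.cast_nonneg k : (0:ℝ) ≤ k)]
    have h5 : ((k:ℝ)+1)^2 ≤ (k+1)^3 := pow_le_pow_right₀ this (by norm_num)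
    have h6 : (1:ℝ) ≤ ((k+m+1:ℕ):ℝ)+1 := by linarith [(Nat.cast_nonneg (k+m+1) : (0:ℝ) ≤ _)]
    nlinarith [pow_pos (by positivity : (0:ℝ) < k+1) 3]
  calc _ ≤ 1/((m:ℝ)+1)^2 * (1/((k:ℝ)+1)^2) := mul_le_mul h3 (h2.trans h4) (abs_nonneg _) (by positivity)
    _ = _ := by ring

noncomputable def V : ℝ := ∑' p : ℕ × ℕ, (-1)^p.2 * vv p

lemma hasSum_V : HasSum (fun p : ℕ × ℕ => (-1)^p.2 * vv p) V := by
  apply Summable.hasSum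
  apply Summable.of_norm
  refine summable_vv.congr fun p => ?_
  rw [norm_mul, norm_pow, norm_neg, norm_one, one_pow, one_mul, Real.norm_of_nonneg (vv_nonneg p)]

lemma hasSum_alW : HasSum (fun n : ℕ => al n * W (n+1)) (-V) := by
  have h := hasSum_V.neg
  rw [← Finset.HasAntidiagonal.sigmaAntidiagonalEquivProd.hasSum_iff] at h
  have h2 := h.sigma (fun n => hasSum_fintype _)
  refine hs_congr h2 (fun n => ?_) rfl
  unfold W
  rw [Finset.mul_sum, ← Finset.Nat.sum_antidiagonal_eq_sum_range_succ_mk (f := fun p : ℕ × ℕ => al n * w (n+1) p.1)]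
  rw [← Finset.sum_coe_sort]
  apply Finset.sum_congr rfl
  rintro ⟨⟨k, m⟩, hp⟩ _
  have hp : k + m = n := Finset.HasAntidiagonal.mem_antidiagonal.mp hp

  subst hp
  simpa using al_mul_w k m

lemma abel (N : ℕ) : ∑ n ∈ Finset.range N,
      (-1:ℝ)^(n+1) / (((n:ℝ)+1)^3 * ((2*(n+1)).choose (n+1) : ℝ)) *
        (10 * A 2 (n+1) - (-1:ℝ)^(n+1) / ((n:ℝ)+1)^2) =
    -4 * (H3 N + 1/2 * W N) * A 2 N + 9 * ∑ n ∈ Finset.range N, 1/(((n:ℝ)+1)^5 * cc n)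
     + 4 * (A 2 N * H3 N - ∑ n ∈ Finset.range N, 1/((n:ℝ)+1)^3 * (A 2 (n+1) - al n / 2)
       + 1/2 * ∑ n ∈ Finset.range N, (-1:ℝ)^(n+1)/((n:ℝ)+1)^5)
     + 2 * ∑ n ∈ Finset.range N, al n * W (n+1) := by
  induction N with
  | zero => simp [A, W]
  | succ N ih =>
    simp only [Finset.sum_range_succ] at ih ⊢
    rw [ih]
    have hW := W_succ N
    have hW' : W N = W (N+1) - (5 * (-1:ℝ)^N / (((N:ℝ)+1)^3 * cc N) - 2 / ((N:ℝ)+1)^3) := by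
      unfold cc; linarith
    have hH : H3 (N+1) = H3 N + 1/((N:ℝ)+1)^3 := by simp [H3, Finset.sum_range_succ]
    have hA : A 2 (N+1) = A 2 N + al N := by simp [A, al, Finset.sum_range_succ]
    rw [hH, hA, hW']
    change _ + _ / (_ * cc N) * _ = _
    unfold al
    have hs : (-1:ℝ)^N * (-1)^N = 1 := by rw [← mul_pow]; simp
    have hc := (cc_pos N).ne'
    have hn : (N:ℝ)+1 ≠ 0 := by positivity
    rw [pow_succ (-1:ℝ) N]
    generalize (-1:ℝ)^N = s at *
    generalize W (N+1) = W1
    field_simp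
    ring_nf
    have hs2 : s^2 = 1 := by rw [sq, hs]
    simp only [hs2]
    ring

lemma reduction (B' : ℝ) (hB' : HasSum (fun n : ℕ => 1/((n:ℝ)+1)^3 * (A 2 (n+1) - al n / 2)) B') :
    Tendsto (fun N => ∑ n ∈ Finset.range N,
      (-1:ℝ)^(n+1) / (((n:ℝ)+1)^3 * ((2*(n+1)).choose (n+1) : ℝ)) *
        (10 * A 2 (n+1) - (-1:ℝ)^(n+1) / ((n:ℝ)+1)^2))
      atTop (𝓝 (9 * g5 - 2 * V - 4 * B' - 15/8 * zeta 5)) := by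
  simp only [abel]
  have hA : Tendsto (fun N => A 2 N) atTop (𝓝 (-(1 - 2/2^2) * zeta 2)) := (hasSum_alt 2 le_rfl).tendsto_sum_nat
  have hH : Tendsto H3 atTop (𝓝 (zeta 3)) := (hasSum_zeta 3 (by norm_num)).tendsto_sum_nat
  have h5 := (hasSum_alt 5 (by norm_num)).tendsto_sum_nat
  have := (((((hH.add (W_tendsto.const_mul (1/2))).const_mul (-4)).mul hA).add (hasSum_g5.tendsto_sum_nat.const_mul 9)).add
    ((((hA.mul hH).sub hB'.tendsto_sum_nat).add (h5.const_mul (1/2))).const_mul 4)).add (hasSum_alW.tendsto_sum_nat.const_mul 2)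
  convert this using 2
  ring

end Z11
open Filter Topology MeasureTheory
namespace Z11

lemma hd_congr {f g : ℝ → ℝ} {f' g' x : ℝ} (h : HasDerivAt f f' x) (hf : ∀ y, g y = f y) (hab : g' = f') :
    HasDerivAt g g' x := by
  rw [hab, funext hf]; exact h

lemma real_hasDerivAt_tsum {u : ℕ → ℝ} (g g' : ℕ → ℝ → ℝ) (hu : Summable u) (hg0 : Summable fun n => g n 0)
    (hg : ∀ n y, HasDerivAt (g n) (g' n y) y) (hg' : ∀ n y, |g' n y| ≤ u n) (y : ℝ) :
    HasDerivAt (fun z => ∑' n, g n z) (∑' n, g' n y) y :=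
  hasDerivAt_tsum hu hg hg' hg0 y

noncomputable def Sn (s : ℕ) (x : ℝ) : ℝ := ∑' n : ℕ, Real.sin (2*((n:ℝ)+1)*x) / ((n:ℝ)+1)^s
noncomputable def Cn (s : ℕ) (x : ℝ) : ℝ := ∑' n : ℕ, Real.cos (2*((n:ℝ)+1)*x) / ((n:ℝ)+1)^s
noncomputable def el (x : ℝ) : ℝ := Real.log (2 * Real.sin x)

lemma sin_term_le (s : ℕ) (n : ℕ) (x : ℝ) : ‖Real.sin (2*((n:ℝ)+1)*x) / ((n:ℝ)+1)^s‖ ≤ 1/((n:ℝ)+1)^s := by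
  rw [norm_div, Real.norm_eq_abs, Real.norm_of_nonneg (by positivity : (0:ℝ) ≤ ((n:ℝ)+1)^s)]
  gcongr; exact Real.abs_sin_le_one _

lemma cos_term_le (s : ℕ) (n : ℕ) (x : ℝ) : ‖Real.cos (2*((n:ℝ)+1)*x) / ((n:ℝ)+1)^s‖ ≤ 1/((n:ℝ)+1)^s := by
  rw [norm_div, Real.norm_eq_abs, Real.norm_of_nonneg (by positivity : (0:ℝ) ≤ ((n:ℝ)+1)^s)]
  gcongr; exact Real.abs_cos_le_one _

lemma hasSum_Sn (s : ℕ) (hs : 2 ≤ s) (x : ℝ) :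
    HasSum (fun n : ℕ => Real.sin (2*((n:ℝ)+1)*x) / ((n:ℝ)+1)^s) (Sn s x) :=
  (Summable.of_norm_bounded (summable_zeta s hs) (fun n => sin_term_le s n x)).hasSum

lemma hasSum_Cn (s : ℕ) (hs : 2 ≤ s) (x : ℝ) :
    HasSum (fun n : ℕ => Real.cos (2*((n:ℝ)+1)*x) / ((n:ℝ)+1)^s) (Cn s x) :=
  (Summable.of_norm_bounded (summable_zeta s hs) (fun n => cos_term_le s n x)).hasSum

lemma continuous_Sn (s : ℕ) (hs : 2 ≤ s) : Continuous (Sn s) :=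
  continuous_tsum (fun n => by fun_prop) (summable_zeta s hs) (fun n x => sin_term_le s n x)

lemma continuous_Cn (s : ℕ) (hs : 2 ≤ s) : Continuous (Cn s) :=
  continuous_tsum (fun n => by fun_prop) (summable_zeta s hs) (fun n x => cos_term_le s n x)

lemma hasDerivAt_Sn (s : ℕ) (hs : 2 ≤ s) (x : ℝ) : HasDerivAt (Sn (s+1)) (2 * Cn s x) x := by
  have h : HasDerivAt (Sn (s+1)) (∑' n : ℕ, 2 * (Real.cos (2*((n:ℝ)+1)*x) / ((n:ℝ)+1)^s)) x := by
    refine real_hasDerivAt_tsum (u := fun n : ℕ => 2 * (1/((n:ℝ)+1)^s)) (fun (n : ℕ) (z : ℝ) => Real.sin (2*((n:ℝ)+1)*z) / ((n:ℝ)+1)^(s+1))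
      (fun (n : ℕ) (z : ℝ) => 2 * (Real.cos (2*((n:ℝ)+1)*z) / ((n:ℝ)+1)^s)) ((summable_zeta s hs).mul_left 2)
      (hasSum_Sn (s+1) (by omega) 0).summable ?_ ?_ x
    · intro n y
      have : HasDerivAt (fun z : ℝ => Real.sin (2*((n:ℝ)+1)*z) / ((n:ℝ)+1)^(s+1))
        (Real.cos (2*((n:ℝ)+1)*y) * (2*((n:ℝ)+1)*1) / ((n:ℝ)+1)^(s+1)) y :=
        (((hasDerivAt_id y).const_mul (2*((n:ℝ)+1))).sin).div_const _
      refine hd_congr this (fun _ => rfl) ?_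
      rw [pow_succ]; field_simp
    · intro n y
      have := cos_term_le s n y
      rw [Real.norm_eq_abs] at this
      rw [abs_mul, abs_two]
      linarith
  rwa [tsum_mul_left] at h

lemma hasDerivAt_Cn (s : ℕ) (hs : 2 ≤ s) (x : ℝ) : HasDerivAt (Cn (s+1)) (-2 * Sn s x) x := by
  have h : HasDerivAt (Cn (s+1)) (∑' n : ℕ, -2 * (Real.sin (2*((n:ℝ)+1)*x) / ((n:ℝ)+1)^s)) x := by
    refine real_hasDerivAt_tsum (u := fun n : ℕ => 2 * (1/((n:ℝ)+1)^s)) (fun (n : ℕ) (z : ℝ) => Real.cos (2*((n:ℝ)+1)*z) / ((n:ℝ)+1)^(s+1))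
      (fun (n : ℕ) (z : ℝ) => -2 * (Real.sin (2*((n:ℝ)+1)*z) / ((n:ℝ)+1)^s)) ((summable_zeta s hs).mul_left 2)
      (hasSum_Cn (s+1) (by omega) 0).summable ?_ ?_ x
    · intro n y
      have : HasDerivAt (fun z : ℝ => Real.cos (2*((n:ℝ)+1)*z) / ((n:ℝ)+1)^(s+1))
        (-Real.sin (2*((n:ℝ)+1)*y) * (2*((n:ℝ)+1)*1) / ((n:ℝ)+1)^(s+1)) y :=
        (((hasDerivAt_id y).const_mul (2*((n:ℝ)+1))).cos).div_const _
      refine hd_congr this (fun _ => rfl) ?_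
      rw [pow_succ]; field_simp
    · intro n y
      have := sin_term_le s n y
      rw [Real.norm_eq_abs] at this
      rw [abs_mul, abs_neg, abs_two]
      linarith
  rwa [tsum_mul_left] at h

noncomputable def qq (r x : ℝ) : ℝ := (1-r)^2 + 4*r*Real.sin x^2

lemma hasSum_logq (r x : ℝ) (hr0 : 0 ≤ r) (hr : r < 1) :
    HasSum (fun n : ℕ => r^(n+1) * Real.cos (2*((n:ℝ)+1)*x) / ((n:ℝ)+1)) (-(1/2 * Real.log (qq r x))) := by
  set z : ℂ := r * Complex.exp ((2*x:ℝ) * Complex.I) with hz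
  have hzn : ‖z‖ < 1 := by
    rw [hz, norm_mul, Complex.norm_exp_ofReal_mul_I, mul_one, Complex.norm_real, Real.norm_of_nonneg hr0]; exact hr
  have h := Complex.hasSum_taylorSeries_neg_log hzn
  have h1 := (hasSum_nat_add_iff' 1).mpr h
  have h2 := Complex.hasSum_re h1
  refine hs_congr h2 (fun n => ?_) ?_
  · have : z^(n+1) = ((r^(n+1) : ℝ):ℂ) * Complex.exp (((2*((n:ℝ)+1)*x : ℝ):ℂ) * Complex.I) := by
      rw [hz, mul_pow, ← Complex.exp_nat_mul]
      push_cast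
      congr 2; ring
    rw [this]
    rw [show ((n+1:ℕ):ℂ) = (((n:ℝ)+1 : ℝ) : ℂ) by push_cast; rfl, Complex.div_ofReal_re, Complex.re_ofReal_mul, Complex.exp_ofReal_mul_I_re]
  · have hn : ‖1 - z‖^2 = qq r x := by
      rw [← Complex.normSq_eq_norm_sq, Complex.normSq_apply]
      simp only [Complex.sub_re, Complex.sub_im, Complex.one_re, Complex.one_im, hz, Complex.re_ofReal_mul, Complex.im_ofReal_mul,
        Complex.exp_ofReal_mul_I_re, Complex.exp_ofReal_mul_I_im, qq]
      rw [Real.cos_two_mul, Real.sin_two_mul]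
      have := Real.sin_sq_add_cos_sq x
      have h2 : Real.sin x^2 = 1 - Real.cos x^2 := by linarith
      have h3 : (0 - r * (2 * Real.sin x * Real.cos x)) * (0 - r * (2 * Real.sin x * Real.cos x))
        = 4*r^2*Real.sin x^2*Real.cos x^2 := by ring
      rw [h3, h2]; ring
    simp only [Finset.range_one, Finset.sum_singleton, pow_zero, Nat.cast_zero, div_zero, sub_zero, Complex.neg_re, Complex.log_re]
    rw [← hn, Real.log_pow]; push_cast; ring

lemma qq_lower (r x : ℝ) (hr : 1/4 ≤ r) : Real.sin x^2 ≤ qq r x := by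
  unfold qq; nlinarith [sq_nonneg (1-r), sq_nonneg (Real.sin x)]

lemma qq_upper (r x : ℝ) (hr : 0 ≤ r) (hr1 : r ≤ 1) : qq r x ≤ 4 := by
  unfold qq; nlinarith [Real.sin_sq_le_one x]

lemma intervalIntegrable_el (a b : ℝ) : IntervalIntegrable el volume a b := by
  have h : IntervalIntegrable (fun x => Real.log 2 + Real.log (Real.sin x)) volume a b :=
    (intervalIntegrable_const).add intervalIntegrable_log_sin
  refine h.congr_ae ?_
  have hz : (volume : Measure ℝ) {x : ℝ | Real.sin x = 0} = 0 := by
    apply Set.Countable.measure_zero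
    have : {x : ℝ | Real.sin x = 0} = Set.range (fun n : ℤ => (n:ℝ) * Real.pi) := by
      ext x; simp [Real.sin_eq_zero_iff]
    rw [this]; exact Set.countable_range _
  have : ∀ᵐ x : ℝ, Real.sin x ≠ 0 := by
    rw [ae_iff]; simpa using hz
  filter_upwards [ae_restrict_of_ae this] with x hx
  unfold el; rw [Real.log_mul (by norm_num) hx]

lemma integral_el (x : ℝ) (hx0 : 0 ≤ x) (hx : x ≤ Real.pi/2) : ∫ t in (0:ℝ)..x, el t = -(1/2) * Sn 2 x := by
  have hL : Tendsto (fun r : ℝ => ∫ t in (0:ℝ)..x, 1/2 * Real.log (qq r t)) (𝓝[<] 1) (𝓝 (∫ t in (0:ℝ)..x, el t)) := by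
    apply intervalIntegral.tendsto_integral_filter_of_dominated_convergence
      (fun t => Real.log 2 + |Real.log (Real.sin t)|)
    · refine Eventually.of_forall fun r => ?_
      apply Measurable.aestronglyMeasurable
      unfold qq; fun_prop
    · have h1 : ∀ᶠ r : ℝ in 𝓝[<] 1, 1/4 < r := nhdsWithin_le_nhds (eventually_gt_nhds (by norm_num))
      filter_upwards [h1, self_mem_nhdsWithin] with r hr1 hr2
      refine ae_of_all _ fun t ht => ?_
      rw [Set.uIoc_of_le hx0] at ht
      have hs : 0 < Real.sin t := Real.sin_pos_of_pos_of_lt_pi ht.1 (by linarith [ht.2, Real.pi_pos])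
      have hq1 := qq_lower r t hr1.le
      have hq2 := qq_upper r t (by linarith) (le_of_lt hr2)
      have hq0 : 0 < qq r t := lt_of_lt_of_le (by positivity) hq1
      have l1 := Real.log_le_log (by positivity) hq1
      have l2 := Real.log_le_log hq0 hq2
      rw [Real.log_pow] at l1
      rw [show (4:ℝ) = 2^2 by norm_num, Real.log_pow] at l2
      push_cast at l1 l2
      have l3 : 0 ≤ Real.log 2 := Real.log_nonneg (by norm_num)
      rw [Real.norm_eq_abs, abs_le]
      constructor
      · linarith [neg_abs_le (Real.log (Real.sin t))]
      · linarith [abs_nonneg (Real.log (Real.sin t))]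
    · exact (intervalIntegrable_const).add intervalIntegrable_log_sin.abs
    · refine ae_of_all _ fun t ht => ?_
      rw [Set.uIoc_of_le hx0] at ht
      have hs : 0 < Real.sin t := Real.sin_pos_of_pos_of_lt_pi ht.1 (by linarith [ht.2, Real.pi_pos])
      have : ContinuousAt (fun r => 1/2 * Real.log (qq r t)) 1 := by
        unfold qq
        apply ContinuousAt.const_mul
        apply ContinuousAt.log (by fun_prop)
        have : (0:ℝ) < (1-1)^2 + 4*1*Real.sin t^2 := by positivity
        exact this.ne'
      have h2 := this.tendsto
      have h3 : 1/2 * Real.log (qq 1 t) = el t := by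
        unfold qq el
        rw [show (1-1:ℝ)^2 + 4*1*Real.sin t^2 = (2*Real.sin t)^2 by ring, Real.log_pow]; push_cast; ring
      rw [h3] at h2
      exact h2.mono_left nhdsWithin_le_nhds
  have hR : Tendsto (fun r : ℝ => ∑' n : ℕ, -(r^(n+1) * (Real.sin (2*((n:ℝ)+1)*x) / ((n:ℝ)+1)^2) * (1/2))) (𝓝[<] 1)
      (𝓝 (∑' n : ℕ, -(Real.sin (2*((n:ℝ)+1)*x) / ((n:ℝ)+1)^2 * (1/2)))) := by
    apply tendsto_tsum_of_dominated_convergence (bound := fun n : ℕ => 1/((n:ℝ)+1)^2) (summable_zeta 2 le_rfl)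
    · intro n
      have : ContinuousAt (fun r : ℝ => -(r^(n+1) * (Real.sin (2*((n:ℝ)+1)*x) / ((n:ℝ)+1)^2) * (1/2))) 1 := by fun_prop
      have h := this.tendsto
      simp only [one_pow, one_mul] at h
      exact h.mono_left nhdsWithin_le_nhds
    · have h1 : ∀ᶠ r : ℝ in 𝓝[<] 1, 1/4 < r := nhdsWithin_le_nhds (eventually_gt_nhds (by norm_num))
      filter_upwards [h1, self_mem_nhdsWithin] with r hr1 hr2 n
      have hr2 : r < 1 := hr2
      have := sin_term_le 2 n x
      have h3 : |r^(n+1)| ≤ 1 := by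
        rw [abs_of_nonneg (by positivity)]
        exact pow_le_one₀ (by linarith) hr2.le
      rw [norm_neg, norm_mul, norm_mul, Real.norm_eq_abs (r^(n+1))]
      have h4 : ‖(1/2:ℝ)‖ ≤ 1 := by norm_num
      calc _ ≤ 1 * (1/((n:ℝ)+1)^2) * 1 := by gcongr
        _ = _ := by ring
  have hE : ∀ᶠ r : ℝ in 𝓝[<] 1, ∑' n : ℕ, -(r^(n+1) * (Real.sin (2*((n:ℝ)+1)*x) / ((n:ℝ)+1)^2) * (1/2)) = ∫ t in (0:ℝ)..x, 1/2 * Real.log (qq r t) := by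
    have h1 : ∀ᶠ r : ℝ in 𝓝[<] 1, 1/4 < r := nhdsWithin_le_nhds (eventually_gt_nhds (by norm_num))
    filter_upwards [h1, self_mem_nhdsWithin] with r hr1 hr2
    have hr2 : r < 1 := hr2
    have hr0 : 0 ≤ r := by linarith
    have key := intervalIntegral.hasSum_integral_of_dominated_convergence (μ := volume) (a := 0) (b := x)
      (F := fun (n:ℕ) t => -(r^(n+1) * Real.cos (2*((n:ℝ)+1)*t) / ((n:ℝ)+1)))
      (f := fun t => 1/2 * Real.log (qq r t)) (fun (n:ℕ) _ => r^(n+1))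
      (fun n => by apply Continuous.aestronglyMeasurable; fun_prop)
      (fun n => ae_of_all _ fun t _ => by
        rw [norm_neg, norm_div, norm_mul, Real.norm_of_nonneg (by positivity : 0 ≤ r^(n+1)), Real.norm_of_nonneg (by positivity : (0:ℝ) ≤ (n:ℝ)+1)]
        rw [div_le_iff₀ (by positivity)]
        have := Real.abs_cos_le_one (2*((n:ℝ)+1)*t)
        rw [Real.norm_eq_abs]
        have h5 : (0:ℝ) ≤ r^(n+1) := by positivity
        gcongr
        linarith [(Nat.cast_nonneg n : (0:ℝ) ≤ n)])
      (ae_of_all _ fun t _ => (summable_nat_add_iff 1).mpr (summable_geometric_of_lt_one hr0 hr2))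
      (by simp)
      (ae_of_all _ fun t _ => by simpa using (hasSum_logq r t hr0 hr2).neg)
    rw [← key.tsum_eq]
    congr 1
    funext n
    rw [intervalIntegral.integral_neg, intervalIntegral.integral_div, intervalIntegral.integral_const_mul]
    rw [intervalIntegral.integral_comp_mul_left (f := Real.cos) (by positivity : 2*((n:ℝ)+1) ≠ 0)]
    rw [integral_cos]
    simp
    field_simp
  have h := tendsto_nhds_unique (hL.congr' (hE.mono fun r h => h.symm)) hR
  rw [h, tsum_neg, tsum_mul_right]
  unfold Sn; ring

lemma hasDerivAt_Sn2 (x : ℝ) (hx0 : 0 < x) (hx : x < Real.pi/2) : HasDerivAt (Sn 2) (-2 * el x) x := by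
  have hs : 0 < Real.sin x := Real.sin_pos_of_pos_of_lt_pi hx0 (by linarith [Real.pi_pos])
  have hc : ContinuousAt el x := by
    unfold el
    apply ContinuousAt.log (by fun_prop) (by positivity)
  have h := intervalIntegral.integral_hasDerivAt_right (intervalIntegrable_el 0 x)
    (by
      apply StronglyMeasurable.stronglyMeasurableAtFilter
      apply Measurable.stronglyMeasurable
      unfold el; fun_prop) hc
  have h2 := h.const_mul (-2)
  refine h2.congr_of_eventuallyEq ?_
  filter_upwards [eventually_gt_nhds hx0, eventually_lt_nhds hx] with y hy1 hy2
  rw [integral_el y hy1.le hy2.le]; ring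

/-- Primitive of a quartic polynomial times log (2 sin). -/
noncomputable def Ph (c0 c1 c2 c3 c4 x : ℝ) : ℝ :=
  -((c0+c1*x+c2*x^2+c3*x^3+c4*x^4) * Sn 2 x / 2 + (c1+2*c2*x+3*c3*x^2+4*c4*x^3) * Cn 3 x / 4
   - (2*c2+6*c3*x+12*c4*x^2) * Sn 4 x / 8 - (6*c3+24*c4*x) * Cn 5 x / 16 + 24 * c4 * Sn 6 x / 32)

lemma integral_poly_el (c0 c1 c2 c3 c4 a b : ℝ) (ha : 0 ≤ a) (hab : a ≤ b) (hb : b ≤ Real.pi/2) :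
    ∫ x in a..b, (c0+c1*x+c2*x^2+c3*x^3+c4*x^4) * el x = Ph c0 c1 c2 c3 c4 b - Ph c0 c1 c2 c3 c4 a := by
  apply intervalIntegral.integral_eq_sub_of_hasDerivAt_of_le hab
  · have := continuous_Sn 2 (by norm_num)
    have := continuous_Sn 4 (by norm_num)
    have := continuous_Sn 6 (by norm_num)
    have := continuous_Cn 3 (by norm_num)
    have := continuous_Cn 5 (by norm_num)
    apply Continuous.continuousOn
    unfold Ph; fun_prop
  · intro x hx
    have d2 := hasDerivAt_Sn2 x (by linarith [hx.1]) (by linarith [hx.2])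
    have d3 := hasDerivAt_Cn 2 (by norm_num) x
    have d4 := hasDerivAt_Sn 3 (by norm_num) x
    have d5 := hasDerivAt_Cn 4 (by norm_num) x
    have d6 := hasDerivAt_Sn 5 (by norm_num) x
    norm_num at d3 d4 d5 d6
    have p : ∀ n : ℕ, HasDerivAt (fun x : ℝ => x^n) (n * x^(n-1)) x := fun n => hasDerivAt_pow n x
    have p0 : HasDerivAt (fun x : ℝ => c0+c1*x+c2*x^2+c3*x^3+c4*x^4) (c1+2*c2*x+3*c3*x^2+4*c4*x^3) x := by
      have := (((((hasDerivAt_id x).const_mul c1).const_add c0).add ((p 2).const_mul c2)).add ((p 3).const_mul c3)).add ((p 4).const_mul c4)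
      refine hd_congr this (fun _ => rfl) ?_
      norm_num; ring
    have p1 : HasDerivAt (fun x : ℝ => c1+2*c2*x+3*c3*x^2+4*c4*x^3) (2*c2+6*c3*x+12*c4*x^2) x := by
      have := ((((hasDerivAt_id x).const_mul (2*c2)).const_add c1).add ((p 2).const_mul (3*c3))).add ((p 3).const_mul (4*c4))
      refine hd_congr this (fun _ => rfl) ?_
      norm_num; ring
    have p2 : HasDerivAt (fun x : ℝ => 2*c2+6*c3*x+12*c4*x^2) (6*c3+24*c4*x) x := by
      have := (((hasDerivAt_id x).const_mul (6*c3)).const_add (2*c2)).add ((p 2).const_mul (12*c4))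
      refine hd_congr this (fun _ => rfl) ?_
      norm_num; ring
    have p3 : HasDerivAt (fun x : ℝ => 6*c3+24*c4*x) (24*c4) x := by
      have := ((hasDerivAt_id x).const_mul (24*c4)).const_add (6*c3)
      refine hd_congr this (fun _ => rfl) ?_
      norm_num
    have := ((((((p0.mul d2).div_const 2).add ((p1.mul d3).div_const 4)).sub ((p2.mul d4).div_const 8)).sub
      ((p3.mul d5).div_const 16)).add ((d6.const_mul (24*c4)).div_const 32)).neg
    refine hd_congr this (fun _ => rfl) ?_
    ring
  · exact (intervalIntegrable_el a b).continuousOn_mul (by fun_prop)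

end Z11
open Filter Topology MeasureTheory
namespace Z11

lemma Cn_zero (s : ℕ) : Cn s 0 = zeta s := by simp [Cn, zeta]
lemma Sn_zero (s : ℕ) : Sn s 0 = 0 := by simp [Sn]

lemma Sn_pi_half (s : ℕ) : Sn s (Real.pi/2) = 0 := by
  unfold Sn
  have : ∀ n : ℕ, Real.sin (2*((n:ℝ)+1)*(Real.pi/2)) = 0 := fun n => by
    rw [show 2*((n:ℝ)+1)*(Real.pi/2) = ((n+1:ℕ):ℝ) * Real.pi by push_cast; ring, Real.sin_nat_mul_pi]
  simp [this]

lemma Cn_pi_half (s : ℕ) (hs : 2 ≤ s) : Cn s (Real.pi/2) = -(1 - 2/2^s) * zeta s := by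
  unfold Cn
  rw [← (hasSum_alt s hs).tsum_eq]
  congr 1; funext n
  rw [show 2*((n:ℝ)+1)*(Real.pi/2) = ((n+1:ℕ):ℝ) * Real.pi by push_cast; ring, Real.cos_nat_mul_pi]

lemma cos_third (m : ℕ) : Real.cos (m * (Real.pi/3)) = -(1/2) * (-1:ℝ)^m + (if 3 ∣ m then (3/2) * (-1:ℝ)^m else 0) := by
  induction m using Nat.strong_induction_on with
  | _ m ih =>
    match m with
    | 0 => norm_num
    | 1 => norm_num
    | 2 =>
      have : ((2:ℕ):ℝ) * (Real.pi/3) = Real.pi - Real.pi/3 := by push_cast; ring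
      rw [this, Real.cos_pi_sub]; norm_num
    | m+3 =>
      have h := ih m (by omega)
      have : ((m+3:ℕ):ℝ) * (Real.pi/3) = m * (Real.pi/3) + Real.pi := by push_cast; ring
      rw [this, Real.cos_add_pi, h]
      have h3 : (3 ∣ m+3) ↔ 3 ∣ m := by omega
      simp only [h3, pow_add]
      split_ifs <;> ring

lemma Cn_pi_six (s : ℕ) (hs : 2 ≤ s) : Cn s (Real.pi/6) = 1/2 * (1 - 2/2^s) * (1 - 3/3^s) * zeta s := by
  have ha := hasSum_alt s hs
  set f : ℕ → ℝ := fun n => if 3 ∣ n+1 then (3/2) * ((-1:ℝ)^(n+1) / ((n:ℝ)+1)^s) else 0 with hf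
  have hinj : Function.Injective (fun m : ℕ => 3*m+2) := fun a b h => by simpa using h
  have h1 : HasSum f (3/2 * (1/3^s) * (-(1 - 2/2^s) * zeta s)) := by
    rw [← hinj.hasSum_iff]
    · refine hs_congr (ha.mul_left (3/2 * (1/3^s))) (fun m => ?_) rfl
      have : 3 ∣ 3*m+2+1 := by omega
      simp only [hf, Function.comp, this, if_true]
      push_cast
      rw [show (3*(m:ℝ)+2+1) = 3 * (m+1) by ring, mul_pow, show 3*m+2+1 = 3*(m+1) by ring, pow_mul]
      norm_num
      field_simp
    · intro x hx
      have : ¬ 3 ∣ x+1 := by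
        rintro ⟨c, hc⟩
        apply hx
        refine ⟨c-1, ?_⟩
        show 3*(c-1)+2 = x
        omega
      simp [hf, this]
  have h2 := (ha.mul_left (-(1/2))).add h1
  have h3 := hasSum_Cn s hs (Real.pi/6)
  have h4 : HasSum (fun n : ℕ => Real.cos (2*((n:ℝ)+1)*(Real.pi/6)) / ((n:ℝ)+1)^s) (-(1/2) * (-(1 - 2/2^s) * zeta s) + 3/2 * (1/3^s) * (-(1 - 2/2^s) * zeta s)) := by
    refine hs_congr h2 (fun n => ?_) rfl
    rw [show 2*((n:ℝ)+1)*(Real.pi/6) = ((n+1:ℕ):ℝ) * (Real.pi/3) by push_cast; ring, cos_third]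
    simp only [hf]
    split_ifs <;> ring
  rw [h3.unique h4]; ring

lemma Cn_pi_four (s : ℕ) (hs : 2 ≤ s) : Cn s (Real.pi/4) = -(1 - 2/2^s) / 2^s * zeta s := by
  have ha := hasSum_alt s hs
  have hinj : Function.Injective (fun m : ℕ => 2*m+1) := fun a b h => by simpa using h
  have h3 := hasSum_Cn s hs (Real.pi/4)
  rw [← hinj.hasSum_iff] at h3
  · refine h3.unique ?_
    refine hs_congr (ha.mul_left (1/2^s)) (fun m => ?_) (by ring)
    simp only [Function.comp]
    rw [show 2*(((2*m+1:ℕ):ℝ)+1)*(Real.pi/4) = ((m+1:ℕ):ℝ) * Real.pi by push_cast; ring, Real.cos_nat_mul_pi]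
    push_cast
    rw [show (2*(m:ℝ)+1+1) = 2 * (m+1) by ring, mul_pow]
    field_simp
  · intro x hx
    have : Even x := by
      by_contra h
      rw [Nat.not_even_iff_odd] at h
      obtain ⟨c, hc⟩ := h
      exact hx ⟨c, hc.symm⟩
    obtain ⟨c, hc⟩ := this
    rw [show 2*((x:ℝ)+1)*(Real.pi/4) = (c:ℝ) * Real.pi + Real.pi/2 by rw [hc]; push_cast; ring, Real.cos_add_pi_div_two, Real.sin_nat_mul_pi]
    simp


lemma dirichlet_cot (k : ℕ) (x : ℝ) (hs : Real.sin x ≠ 0) :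
    Real.cos x / Real.sin x * Real.sin (2*((k:ℝ)+1)*x) =
      1 + 2 * ∑ n ∈ Finset.range k, Real.cos (2*((n:ℝ)+1)*x) + Real.cos (2*((k:ℝ)+1)*x) := by
  induction k with
  | zero =>
    simp only [Nat.cast_zero, zero_add, mul_one, Finset.range_zero, Finset.sum_empty, mul_zero, add_zero]
    rw [Real.sin_two_mul, Real.cos_two_mul]; field_simp; ring
  | succ k ih =>
    rw [Finset.sum_range_succ]
    have e : Real.sin (2*(((k+1:ℕ):ℝ)+1)*x) = Real.sin (2*((k:ℝ)+1)*x) * Real.cos (2*x) + Real.cos (2*((k:ℝ)+1)*x) * Real.sin (2*x) := by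
      rw [← Real.sin_add]; congr 1; push_cast; ring
    have e2 : Real.cos (2*(((k+1:ℕ):ℝ)+1)*x) = Real.cos (2*((k:ℝ)+1)*x) * Real.cos (2*x) - Real.sin (2*((k:ℝ)+1)*x) * Real.sin (2*x) := by
      rw [← Real.cos_add]; congr 1; push_cast; ring
    have h : Real.cos x / Real.sin x * Real.sin (2*(((k+1:ℕ):ℝ)+1)*x) - Real.cos x / Real.sin x * Real.sin (2*((k:ℝ)+1)*x) =
       Real.cos (2*((k:ℝ)+1)*x) + Real.cos (2*(((k+1:ℕ):ℝ)+1)*x) := by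
      rw [e, e2, Real.cos_two_mul, Real.sin_two_mul]
      have := Real.sin_sq_add_cos_sq x
      field_simp
      linear_combination (2 * Real.cos x * Real.sin (2*((k:ℝ)+1)*x)) * this
    linarith

noncomputable def c2 (x : ℝ) : ℝ := x^2 - Real.pi^2/12

lemma integral_c2_cos (n : ℕ) : ∫ x in (0:ℝ)..(Real.pi/2), c2 x * Real.cos (2*((n:ℝ)+1)*x) = Real.pi/4 * al n := by
  set a : ℝ := 2*((n:ℝ)+1) with ha
  have ha0 : a ≠ 0 := by positivity
  have h : ∫ x in (0:ℝ)..(Real.pi/2), c2 x * Real.cos (a*x) =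
    (fun x => c2 x * Real.sin (a*x)/a + 2*x*Real.cos (a*x)/a^2 - 2*Real.sin (a*x)/a^3) (Real.pi/2) -
    (fun x => c2 x * Real.sin (a*x)/a + 2*x*Real.cos (a*x)/a^2 - 2*Real.sin (a*x)/a^3) 0 := by
    apply intervalIntegral.integral_eq_sub_of_hasDerivAt
      (f := fun x => c2 x * Real.sin (a*x)/a + 2*x*Real.cos (a*x)/a^2 - 2*Real.sin (a*x)/a^3)
    · intro x _
      have hc : HasDerivAt c2 (2*x) x := by
        refine hd_congr ((hasDerivAt_pow 2 x).sub_const (Real.pi^2/12)) (fun _ => rfl) (by norm_num)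
      have hl : HasDerivAt (fun x => a*x) a x := by simpa using (hasDerivAt_id x).const_mul a
      have := (((hc.mul hl.sin).div_const a).add ((((hasDerivAt_id x).const_mul 2).mul hl.cos).div_const (a^2))).sub
        ((hl.sin.const_mul 2).div_const (a^3))
      refine hd_congr this (fun _ => rfl) ?_
      simp only [id]
      field_simp
      ring
    · apply Continuous.intervalIntegrable
      unfold c2; fun_prop
  rw [h]
  have e1 : a * (Real.pi/2) = ((n+1:ℕ):ℝ) * Real.pi := by rw [ha]; push_cast; ring
  simp only [e1, Real.sin_nat_mul_pi, Real.cos_nat_mul_pi, mul_zero, Real.sin_zero]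
  unfold al
  rw [ha]
  field_simp
  ring

lemma integral_c2 : ∫ x in (0:ℝ)..(Real.pi/2), c2 x = 0 := by
  unfold c2
  rw [intervalIntegral.integral_sub (by apply Continuous.intervalIntegrable; fun_prop) (by simp), integral_pow]
  simp; ring

lemma A_eq_integral (k : ℕ) : A 2 (k+1) - al k / 2 =
    2/Real.pi * ∫ x in (0:ℝ)..(Real.pi/2), c2 x * (Real.cos x / Real.sin x * Real.sin (2*((k:ℝ)+1)*x)) := by
  have hc2 : Continuous c2 := by unfold c2; fun_prop
  have h1 : ∫ x in (0:ℝ)..(Real.pi/2), c2 x * (Real.cos x / Real.sin x * Real.sin (2*((k:ℝ)+1)*x)) =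
      ∫ x in (0:ℝ)..(Real.pi/2), (c2 x + 2 * ∑ n ∈ Finset.range k, c2 x * Real.cos (2*((n:ℝ)+1)*x) + c2 x * Real.cos (2*((k:ℝ)+1)*x)) := by
    apply intervalIntegral.integral_congr_ae
    refine ae_of_all _ fun x hx => ?_
    rw [Set.uIoc_of_le (by positivity)] at hx
    have hs : 0 < Real.sin x := Real.sin_pos_of_pos_of_lt_pi hx.1 (by linarith [hx.2, Real.pi_pos])
    rw [dirichlet_cot k x hs.ne', ← Finset.mul_sum]; ring
  rw [h1, intervalIntegral.integral_add, intervalIntegral.integral_add, intervalIntegral.integral_const_mul,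
    intervalIntegral.integral_finsetSum, integral_c2, integral_c2_cos]
  · simp only [integral_c2_cos]
    rw [← Finset.mul_sum]
    have : A 2 (k+1) = ∑ n ∈ Finset.range k, al n + al k := by
      simp [A, al, Finset.sum_range_succ]
    rw [this]
    have := Real.pi_pos.ne'
    field_simp; ring
  · intro i _
    apply Continuous.intervalIntegrable; fun_prop
  · exact hc2.intervalIntegrable _ _
  · apply Continuous.intervalIntegrable; fun_prop
  · apply Continuous.intervalIntegrable; fun_prop
  · apply Continuous.intervalIntegrable; fun_prop

noncomputable def s3 (x : ℝ) : ℝ := 2*x*(2*x-Real.pi)*(2*x-2*Real.pi)/12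

lemma hasSum_s3 (x : ℝ) (h0 : 0 ≤ x) (h1 : x ≤ Real.pi) :
    HasSum (fun k : ℕ => 1/((k:ℝ)+1)^3 * Real.sin (2*((k:ℝ)+1)*x)) (s3 x) := by
  have h := hasSum_one_div_nat_pow_mul_sin (k := 1) (by norm_num) (x := x/Real.pi)
    ⟨by positivity, by rw [div_le_one Real.pi_pos]; exact h1⟩
  have h2 := (hasSum_nat_add_iff' 1).mpr h
  refine hs_congr h2 (fun k => ?_) ?_
  · push_cast
    congr 2
    have := Real.pi_pos.ne'
    field_simp
  · have hB : ∀ y : ℝ, (Polynomial.map (algebraMap ℚ ℝ) (Polynomial.bernoulli (2*1+1))).eval y = y^3 - 3/2*y^2 + 1/2*y := by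
      intro y
      simp_rw [Polynomial.bernoulli, Finset.sum_range_succ, Polynomial.map_add, Polynomial.eval_add, Polynomial.map_monomial, Polynomial.eval_monomial]
      rw [Finset.sum_range_zero, Polynomial.map_zero, Polynomial.eval_zero]
      norm_num [bernoulli, bernoulli'_zero, bernoulli'_one, bernoulli'_two, bernoulli'_three, Nat.choose]
      ring
    rw [hB]
    unfold s3
    have := Real.pi_pos.ne'
    norm_num [Nat.factorial]
    field_simp
    ring

lemma abs_sin_nat_le (k : ℕ) (x : ℝ) : |Real.sin (k*x)| ≤ k * |Real.sin x| := by
  induction k with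
  | zero => simp
  | succ k ih =>
    have : ((k+1:ℕ):ℝ)*x = k*x + x := by push_cast; ring
    rw [this, Real.sin_add]
    have h1 := Real.abs_cos_le_one x
    have h2 := Real.abs_cos_le_one (k*x)
    calc _ ≤ |Real.sin (k*x) * Real.cos x| + |Real.cos (k*x) * Real.sin x| := abs_add_le _ _
      _ = |Real.sin (k*x)| * |Real.cos x| + |Real.cos (k*x)| * |Real.sin x| := by rw [abs_mul, abs_mul]
      _ ≤ (k * |Real.sin x|) * 1 + 1 * |Real.sin x| := by gcongr
      _ = _ := by push_cast; ring

lemma hasSum_Bint : HasSum (fun k : ℕ => 1/((k:ℝ)+1)^3 * (A 2 (k+1) - al k / 2))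
    (2/Real.pi * ∫ x in (0:ℝ)..(Real.pi/2), c2 x * (Real.cos x / Real.sin x * s3 x)) := by
  have key := intervalIntegral.hasSum_integral_of_dominated_convergence (μ := volume) (a := 0) (b := Real.pi/2)
      (F := fun (k:ℕ) x => 1/((k:ℝ)+1)^3 * (c2 x * (Real.cos x / Real.sin x * Real.sin (2*((k:ℝ)+1)*x))))
      (f := fun x => c2 x * (Real.cos x / Real.sin x * s3 x)) (fun (k:ℕ) _ => (Real.pi^2) * 2 * (1/((k:ℝ)+1)^2))
      (fun k => by apply Measurable.aestronglyMeasurable; unfold c2; fun_prop)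
      (fun k => ae_of_all _ fun x hx => by
        rw [Set.uIoc_of_le (by positivity)] at hx
        have hs : 0 < Real.sin x := Real.sin_pos_of_pos_of_lt_pi hx.1 (by linarith [hx.2, Real.pi_pos])
        have b1 : |c2 x| ≤ Real.pi^2 := by
          unfold c2; rw [abs_le]; constructor <;> nlinarith [hx.1, hx.2, Real.pi_pos]
        have b2 : |Real.cos x / Real.sin x * Real.sin (2*((k:ℝ)+1)*x)| ≤ 2*((k:ℝ)+1) := by
          have := abs_sin_nat_le (2*(k+1)) x
          push_cast at this
          rw [abs_mul, abs_div]
          calc _ ≤ 1 / |Real.sin x| * (2*((k:ℝ)+1) * |Real.sin x|) := by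
                gcongr; exact Real.abs_cos_le_one x
            _ = _ := by field_simp
        rw [norm_mul, norm_mul, Real.norm_eq_abs (c2 x), Real.norm_eq_abs (_ * _), Real.norm_of_nonneg (by positivity)]
        calc _ ≤ 1/((k:ℝ)+1)^3 * (Real.pi^2 * (2*((k:ℝ)+1))) := by gcongr
          _ = _ := by field_simp)
      (ae_of_all _ fun t _ => (summable_zeta 2 le_rfl).mul_left _)
      (by simp)
      (ae_of_all _ fun x hx => by
        rw [Set.uIoc_of_le (by positivity)] at hx
        refine hs_congr ((hasSum_s3 x hx.1.le (by linarith [hx.2, Real.pi_pos])).mul_left (c2 x * (Real.cos x / Real.sin x))) (fun k => by ring) (by ring))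
  refine hs_congr (key.mul_left (2/Real.pi)) (fun k => ?_) rfl
  rw [intervalIntegral.integral_const_mul, A_eq_integral]; ring

end Z11
open Filter Topology MeasureTheory
namespace Z11

lemma sin_ge_half (x : ℝ) (h0 : 0 ≤ x) (h1 : x ≤ Real.pi/2) : x/2 ≤ Real.sin x := by
  have h := Real.mul_le_sin h0 h1
  have : (1/2:ℝ) ≤ 2/Real.pi := by
    rw [div_le_div_iff₀ (by norm_num) Real.pi_pos]; linarith [Real.pi_le_four]
  nlinarith

lemma abs_el_le (x : ℝ) (h0 : 0 < x) (h1 : x ≤ Real.pi/2) : |el x| ≤ |Real.log x| + Real.log 2 := by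
  have h := sin_ge_half x h0.le h1
  have hs := Real.sin_le_one x
  unfold el
  have l1 : Real.log x ≤ Real.log (2*Real.sin x) := Real.log_le_log h0 (by linarith)
  have l2 : Real.log (2*Real.sin x) ≤ Real.log 2 := Real.log_le_log (by linarith) (by linarith)
  have l3 : 0 ≤ Real.log 2 := Real.log_nonneg (by norm_num)
  rw [abs_le]; constructor
  · linarith [neg_abs_le (Real.log x)]
  · linarith [abs_nonneg (Real.log x)]

lemma continuousOn_mul_el (b : ℝ) (hb : b ≤ Real.pi/2) : ContinuousOn (fun x => x * el x) (Set.Icc 0 b) := by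
  intro x hx
  rcases hx.1.eq_or_lt with h0 | h0
  · subst h0
    have h2 : Tendsto (fun x : ℝ => |x * Real.log x| + |x| * Real.log 2) (𝓝[Set.Icc 0 b] 0) (𝓝 0) := by
      have : Continuous (fun x : ℝ => |x * Real.log x| + |x| * Real.log 2) := by
        have := Real.continuous_mul_log
        fun_prop
      have h := this.tendsto 0
      simp only [zero_mul, abs_zero, add_zero] at h
      exact h.mono_left nhdsWithin_le_nhds
    unfold ContinuousWithinAt
    simp only [zero_mul]
    refine squeeze_zero_norm' ?_ h2
    filter_upwards [self_mem_nhdsWithin] with y hy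
    rcases hy.1.eq_or_lt with hy0 | hy0
    · rw [← hy0]; simp
    · rw [Real.norm_eq_abs, abs_mul, abs_mul]
      have := abs_el_le y hy0 (hy.2.trans hb)
      nlinarith [abs_nonneg y]
  · apply ContinuousAt.continuousWithinAt
    have := Real.sin_pos_of_pos_of_lt_pi h0 (by linarith [hx.2, Real.pi_pos])
    apply ContinuousAt.mul (by fun_prop)
    unfold el
    exact ContinuousAt.log (by fun_prop) (by positivity)

lemma hasDerivAt_el (x : ℝ) (hs : Real.sin x ≠ 0) : HasDerivAt el (Real.cos x / Real.sin x) x := by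
  have := ((Real.hasDerivAt_sin x).const_mul 2).log (by positivity)
  refine hd_congr this (fun _ => rfl) ?_
  field_simp

lemma intervalIntegrable_cot (r : ℝ → ℝ) (hr : Continuous r) (b : ℝ) (hb0 : 0 ≤ b) (hb : b ≤ Real.pi/2) :
    IntervalIntegrable (fun x => x * r x * (Real.cos x / Real.sin x)) volume 0 b := by
  have h : IntervalIntegrable (fun x => 2 * |r x|) volume 0 b :=
    Continuous.intervalIntegrable (by fun_prop) _ _
  refine h.mono_fun ?_ ?_
  · apply Measurable.aestronglyMeasurable
    have := hr.measurable
    fun_prop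
  · rw [Filter.EventuallyLE, ae_restrict_iff' measurableSet_uIoc]
    refine ae_of_all _ fun x hx => ?_
    rw [Set.uIoc_of_le hb0] at hx
    have h1 := sin_ge_half x hx.1.le (hx.2.trans hb)
    have hs : 0 < Real.sin x := by linarith [hx.1]
    rw [norm_mul, norm_mul, norm_div, norm_mul, Real.norm_eq_abs, Real.norm_eq_abs, Real.norm_eq_abs, Real.norm_eq_abs, abs_of_pos hx.1, abs_of_pos hs]
    rw [Real.norm_eq_abs, Real.norm_eq_abs, abs_abs, abs_two]
    have hc := Real.abs_cos_le_one x
    have h2 : x * (|Real.cos x| / Real.sin x) ≤ 2 := by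
      rw [← mul_div_assoc, div_le_iff₀ hs]
      nlinarith [hx.1, abs_nonneg (Real.cos x)]
    calc _ = x * (|Real.cos x| / Real.sin x) * |r x| := by ring
      _ ≤ _ := by gcongr

lemma cot_by_parts (r q' : ℝ → ℝ) (hr : Continuous r) (hq' : Continuous q')
    (hd : ∀ x, HasDerivAt (fun x => x * r x) (q' x) x) (b : ℝ) (hb0 : 0 ≤ b) (hb : b ≤ Real.pi/2) :
    ∫ x in (0:ℝ)..b, x * r x * (Real.cos x / Real.sin x) = b * r b * el b - ∫ x in (0:ℝ)..b, q' x * el x := by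
  have hi1 := intervalIntegrable_cot r hr b hb0 hb
  have hi2 : IntervalIntegrable (fun x => q' x * el x) volume 0 b :=
    (intervalIntegrable_el 0 b).continuousOn_mul hq'.continuousOn
  have h : ∫ x in (0:ℝ)..b, (q' x * el x + x * r x * (Real.cos x / Real.sin x)) =
     (fun x => x * r x * el x) b - (fun x => x * r x * el x) 0 := by
    apply intervalIntegral.integral_eq_sub_of_hasDerivAt_of_le (f := fun x => x * r x * el x) hb0
    · have := (continuousOn_mul_el b hb).mul hr.continuousOn
      refine this.congr fun x _ => by change x * r x * el x = x * el x * r x; ring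
    · intro x hx
      have hs : 0 < Real.sin x := Real.sin_pos_of_pos_of_lt_pi hx.1 (by linarith [hx.2, Real.pi_pos])
      exact (hd x).mul (hasDerivAt_el x hs.ne')
    · exact hi2.add hi1
  rw [intervalIntegral.integral_add hi2 hi1] at h
  simp only [zero_mul, sub_zero] at h
  linarith

lemma hasSum_B : HasSum (fun k : ℕ => 1/((k:ℝ)+1)^3 * (A 2 (k+1) - al k / 2))
    (Real.pi^2 * zeta 3 / 24 - 9/8 * zeta 5) := by
  refine hs_congr hasSum_Bint (fun _ => rfl) ?_
  have h1 := cot_by_parts (fun x => (2*x^4-3*Real.pi*x^3+5/6*Real.pi^2*x^2+Real.pi^3/4*x-Real.pi^4/12)/3)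
    (fun x => -Real.pi^4/36+Real.pi^3/6*x+5/6*Real.pi^2*x^2+(-4*Real.pi)*x^3+10/3*x^4) (by fun_prop) (by fun_prop)
    (by
      intro x
      have p : ∀ n : ℕ, HasDerivAt (fun x : ℝ => x^n) (n * x^(n-1)) x := fun n => hasDerivAt_pow n x
      have := ((((((p 5).const_mul 2).sub ((p 4).const_mul (3*Real.pi))).add ((p 3).const_mul (5/6*Real.pi^2))).add
        ((p 2).const_mul (Real.pi^3/4))).sub ((p 1).const_mul (Real.pi^4/12))).div_const 3
      refine hd_congr this (fun y => ?_) ?_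
      · simp only [Pi.add_apply, Pi.sub_apply]; ring
      · norm_num; ring) (Real.pi/2) (by positivity) le_rfl
  rw [integral_poly_el _ _ _ _ _ 0 (Real.pi/2) le_rfl (by positivity) le_rfl] at h1
  have h2 : ∫ x in (0:ℝ)..(Real.pi/2), c2 x * (Real.cos x / Real.sin x * s3 x) =
     ∫ x in (0:ℝ)..(Real.pi/2), x * ((2*x^4-3*Real.pi*x^3+5/6*Real.pi^2*x^2+Real.pi^3/4*x-Real.pi^4/12)/3) * (Real.cos x / Real.sin x) := by
    congr 1; funext x; unfold c2 s3; ring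
  rw [h2, h1]
  have he : el (Real.pi/2) = Real.log 2 := by simp [el]
  unfold Ph
  rw [he, Cn_zero, Cn_zero, Sn_zero, Sn_zero, Sn_zero, Sn_pi_half, Sn_pi_half, Sn_pi_half, Cn_pi_half 3 (by norm_num), Cn_pi_half 5 (by norm_num)]
  have := Real.pi_pos.ne'
  field_simp
  ring

end Z11
open Filter Topology MeasureTheory
namespace Z11

lemma sum_tele (b N : ℕ) : ∑ a ∈ Finset.range N, (1/((a:ℝ)+1) - 1/((a:ℝ)+1+b)) =
    ∑ i ∈ Finset.range b, (1/((i:ℝ)+1) - 1/((N:ℝ)+i+1)) := by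
  induction N with
  | zero => simp
  | succ N ih =>
    rw [Finset.sum_range_succ, ih]
    have h : ∀ b : ℕ, ∑ i ∈ Finset.range b, (1/((N:ℝ)+i+1) - 1/((N:ℝ)+1+i+1)) = 1/((N:ℝ)+1) - 1/((N:ℝ)+1+b) := by
      intro b
      induction b with
      | zero => simp
      | succ b ih => rw [Finset.sum_range_succ, ih]; push_cast; ring
    rw [← h b, ← Finset.sum_add_distrib]
    apply Finset.sum_congr rfl; intro i _; push_cast; ring

noncomputable def Hm (n : ℕ) : ℝ := ∑ i ∈ Finset.range n, 1/((i:ℝ)+1)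

lemma hasSum_tele (b : ℕ) : HasSum (fun a : ℕ => 1/((a:ℝ)+1) * (1/((a:ℝ)+1+((b:ℝ)+1)))) (Hm (b+1) / ((b:ℝ)+1)) := by
  rw [hasSum_iff_tendsto_nat_of_nonneg (fun i => by positivity)]
  have h1 : ∀ N : ℕ, ∑ a ∈ Finset.range N, 1/((a:ℝ)+1) * (1/((a:ℝ)+1+((b:ℝ)+1))) =
     (∑ i ∈ Finset.range (b+1), (1/((i:ℝ)+1) - 1/((N:ℝ)+i+1))) / ((b:ℝ)+1) := by
    intro N
    rw [← sum_tele, Finset.sum_div]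
    apply Finset.sum_congr rfl; intro i _; push_cast; field_simp; ring
  simp only [h1]
  apply Tendsto.div_const
  unfold Hm
  apply tendsto_finsetSum
  intro i _
  have : Tendsto (fun N : ℕ => 1/((N:ℝ)+i+1)) atTop (𝓝 0) := by
    have h := (tendsto_one_div_add_atTop_nhds_zero_nat (𝕜 := ℝ)).comp (tendsto_add_atTop_nat i)
    refine h.congr fun N => ?_
    simp
  simpa using this.const_sub (1/((i:ℝ)+1))

lemma summable_base : Summable (fun p : ℕ × ℕ => 1/((p.1:ℝ)+1)^2 * (1/((p.2:ℝ)+1)^2)) :=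
  (summable_zeta 2 le_rfl).mul_of_nonneg (summable_zeta 2 le_rfl) (fun _ => by positivity) (fun _ => by positivity)

/-- exponents on a, b, n = a + b -/
noncomputable def tt (r s t : ℕ) (p : ℕ × ℕ) : ℝ :=
  1/(((p.1:ℝ)+1)^r * ((p.2:ℝ)+1)^s * ((p.1:ℝ)+1+((p.2:ℝ)+1))^t)

lemma tt_nonneg (r s t : ℕ) (p : ℕ × ℕ) : 0 ≤ tt r s t p := by unfold tt; positivity

lemma summable_tt (r s t : ℕ) (h : ∀ a b : ℝ, 1 ≤ a → 1 ≤ b → a^2*b^2 ≤ a^r*b^s*(a+b)^t) : Summable (tt r s t) := by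
  refine Summable.of_nonneg_of_le (tt_nonneg r s t) (fun p => ?_) summable_base
  unfold tt
  rw [one_div_mul_one_div]
  exact one_div_le_one_div_of_le (by positivity) (h _ _ (by simp) (by simp))

lemma summable_tt113 : Summable (tt 1 1 3) := summable_tt _ _ _ fun a b ha hb => by
  have : a*b ≤ (a+b)^3 := by
    nlinarith [mul_nonneg (by linarith : 0 ≤ a) (by linarith : 0 ≤ b), pow_le_pow_right₀ (by linarith : 1 ≤ a+b) (by norm_num : 2 ≤ 3)]
  calc a^2*b^2 = (a*b)*(a*b) := by ring
    _ ≤ (a*b)*(a+b)^3 := by gcongr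
    _ = _ := by ring
lemma summable_tt014 : Summable (tt 0 1 4) := summable_tt _ _ _ fun a b ha hb => by
  calc a^2*b^2 ≤ (a+b)^2*(a+b)^2 := by gcongr <;> linarith
    _ = 1*1*(a+b)^4 := by ring
    _ ≤ a^0*b^1*(a+b)^4 := by rw [pow_zero, pow_one]; gcongr
lemma summable_tt032 : Summable (tt 0 3 2) := summable_tt _ _ _ fun a b ha hb => by
  calc a^2*b^2 ≤ (a+b)^2*b^3 := by gcongr <;> linarith
    _ = _ := by ring
lemma summable_tt023 : Summable (tt 0 2 3) := summable_tt _ _ _ fun a b ha hb => by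
  calc a^2*b^2 ≤ (a+b)^2*b^2 := by gcongr <;> linarith
    _ ≤ (a+b)^3*b^2 := by gcongr <;> linarith
    _ = _ := by ring

lemma tt_pf (p : ℕ × ℕ) : tt 1 3 1 p = tt 0 3 2 p + tt 0 2 3 p + tt 1 1 3 p := by
  unfold tt; field_simp; ring

lemma tt_113 (p : ℕ × ℕ) : tt 1 1 3 p = tt 0 1 4 p + tt 0 1 4 p.swap := by
  unfold tt; simp only [Prod.fst_swap, Prod.snd_swap]; field_simp; ring

lemma hasSum_zz : HasSum (fun p : ℕ × ℕ => 1/((p.1:ℝ)+1)^2 * (1/((p.2:ℝ)+1)^3)) (zeta 2 * zeta 3) := by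
  have h1 : Summable (fun p : ℕ × ℕ => 1/((p.1:ℝ)+1)^2 * (1/((p.2:ℝ)+1)^3)) :=
    (summable_zeta 2 le_rfl).mul_of_nonneg (summable_zeta 3 (by norm_num)) (fun _ => by positivity) (fun _ => by positivity)
  have h2 := hasSum_zeta 2 le_rfl
  have h3 := hasSum_zeta 3 (by norm_num)
  have h4 := h2.mul h3 h1
  exact h4

lemma rel1 : (∑' p, tt 0 3 2 p) + (∑' p, tt 0 2 3 p) + zeta 5 = zeta 2 * zeta 3 := by
  set f : ℕ × ℕ → ℝ := fun p => 1/((p.1:ℝ)+1)^2 * (1/((p.2:ℝ)+1)^3) with hf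
  have h1 : HasSum (fun p => if p.2 < p.1 then f p else 0) (∑' p, tt 0 3 2 p) := by
    have hinj : Function.Injective (fun q : ℕ × ℕ => ((q.1+q.2+1, q.2) : ℕ × ℕ)) := by
      intro x y h; simp only [Prod.mk.injEq] at h; ext <;> omega
    rw [← hinj.hasSum_iff]
    · refine hs_congr summable_tt032.hasSum (fun q => ?_) rfl
      simp only [Function.comp, hf, tt]
      rw [if_pos (by omega)]; push_cast; field_simp; ring
    · intro x hx
      rw [if_neg]
      intro hlt; apply hx; exact ⟨(x.1-x.2-1, x.2), by ext <;> simp; omega⟩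
  have h2 : HasSum (fun p => if p.1 < p.2 then f p else 0) (∑' p, tt 0 2 3 p) := by
    have hinj : Function.Injective (fun q : ℕ × ℕ => ((q.2, q.1+q.2+1) : ℕ × ℕ)) := by
      intro x y h; simp only [Prod.mk.injEq] at h; ext <;> omega
    rw [← hinj.hasSum_iff]
    · refine hs_congr summable_tt023.hasSum (fun q => ?_) rfl
      simp only [Function.comp, hf, tt]
      rw [if_pos (by omega)]; push_cast; field_simp; ring
    · intro x hx
      rw [if_neg]
      intro hlt; apply hx; exact ⟨(x.2-x.1-1, x.1), by ext <;> simp; omega⟩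
  have h3 : HasSum (fun p => if p.1 = p.2 then f p else 0) (zeta 5) := by
    have hinj : Function.Injective (fun q : ℕ => ((q, q) : ℕ × ℕ)) := by
      intro x y h; simp only [Prod.mk.injEq] at h; omega
    rw [← hinj.hasSum_iff]
    · refine hs_congr (hasSum_zeta 5 (by norm_num)) (fun q => ?_) rfl
      simp only [Function.comp, hf, if_true]
      field_simp
    · intro x hx
      rw [if_neg]
      intro hlt; apply hx; exact ⟨x.1, by ext <;> simp; omega⟩
  refine ((h1.add h2).add h3).unique (hs_congr hasSum_zz (fun p => ?_) rfl)
  rcases lt_trichotomy p.1 p.2 with h | h | h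
  · rw [if_neg (by omega), if_pos h, if_neg (by omega)]; simp [hf]
  · rw [if_neg (by omega), if_neg (by omega), if_pos h]; simp [hf]
  · rw [if_pos h, if_neg (by omega), if_neg (by omega)]; simp [hf]

lemma hasSum_antidiag {f : ℕ × ℕ → ℝ} {a : ℝ} (h : HasSum f a) :
    HasSum (fun n => ∑ p ∈ Finset.HasAntidiagonal.antidiagonal n, f p) a := by
  have h2 := (Finset.HasAntidiagonal.sigmaAntidiagonalEquivProd (A := ℕ)).hasSum_iff.mpr h
  refine h2.sigma fun n => ?_
  have := hasSum_fintype (fun p : Finset.HasAntidiagonal.antidiagonal n => f p)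
  refine hs_congr this (fun i => rfl) ?_
  exact (Finset.sum_coe_sort (Finset.HasAntidiagonal.antidiagonal n) f).symm

lemma rel2 : (∑' p, tt 1 3 1 p) = zeta 5 + ∑' p, tt 0 1 4 p := by
  have hs : Summable (tt 1 3 1) := by
    have := (summable_tt032.add summable_tt023).add summable_tt113
    exact this.congr fun p => (tt_pf p).symm
  have h1 : HasSum (fun b : ℕ => Hm (b+1) / ((b:ℝ)+1)^4) (∑' p, tt 1 3 1 p) := by
    have h0 := (Equiv.prodComm ℕ ℕ).hasSum_iff.mpr hs.hasSum
    refine h0.prod_fiberwise fun b => ?_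
    refine hs_congr ((hasSum_tele b).mul_left (1/((b:ℝ)+1)^3)) (fun a => ?_) ?_
    · simp [tt]; ring
    · field_simp
  have h2 : HasSum (fun N : ℕ => Hm (N+1) / ((N:ℝ)+1+1)^4) (∑' p, tt 0 1 4 p) := by
    refine hs_congr (hasSum_antidiag summable_tt014.hasSum) (fun N => ?_) rfl
    rw [Finset.Nat.sum_antidiagonal_eq_sum_range_succ_mk]
    unfold Hm
    rw [Finset.sum_div, ← Finset.sum_range_reflect]
    apply Finset.sum_congr rfl
    intro k hk
    have hk' : k ≤ N := by simpa [Nat.lt_succ_iff] using hk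
    obtain ⟨j, rfl⟩ := Nat.exists_eq_add_of_le hk'
    have : k + j + 1 - 1 - k = j := by omega
    rw [this]
    simp only [tt, Nat.add_sub_cancel_left]
    push_cast; field_simp; ring
  have h3 : HasSum (fun b : ℕ => Hm b / ((b:ℝ)+1)^4) (∑' p, tt 0 1 4 p) := by
    rw [← hasSum_nat_add_iff' 1]
    refine hs_congr h2 (fun i => by push_cast; ring) ?_
    simp [Hm]
  have h4 := (hasSum_zeta 5 (by norm_num)).add h3
  refine h1.unique (hs_congr h4 (fun b => ?_) rfl)
  unfold Hm
  rw [Finset.sum_range_succ]; field_simp; ring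

lemma T113 : (∑' p, tt 1 1 3 p) = 4 * zeta 5 - 2 * (zeta 2 * zeta 3) := by
  have h1 : (∑' p, tt 1 3 1 p) = (∑' p, tt 0 3 2 p) + (∑' p, tt 0 2 3 p) + ∑' p, tt 1 1 3 p := by
    refine (hs_congr ((summable_tt032.hasSum.add summable_tt023.hasSum).add summable_tt113.hasSum) tt_pf rfl).tsum_eq
  have h2 : (∑' p, tt 1 1 3 p) = (∑' p, tt 0 1 4 p) + ∑' p, tt 0 1 4 p := by
    refine (hs_congr (summable_tt014.hasSum.add ((Equiv.prodComm ℕ ℕ).hasSum_iff.mpr summable_tt014.hasSum)) (fun p => ?_) rfl).tsum_eq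
    exact tt_113 p
  have := rel1; have := rel2
  linarith
end Z11
open Filter Topology MeasureTheory
namespace Z11

lemma continuousOn_mul_logsq : ContinuousOn (fun x : ℝ => x * Real.log x ^ 2) (Set.Ici 0) := by
  have h : Continuous (fun x : ℝ => 4 * (Real.sqrt x * Real.log (Real.sqrt x))^2) := by
    have := Real.continuous_mul_log.comp Real.continuous_sqrt
    exact (this.pow 2).const_mul 4 |>.congr fun x => rfl
  refine h.continuousOn.congr fun x hx => ?_
  have hx : 0 ≤ x := hx
  simp only []
  rw [Real.log_sqrt hx, mul_pow, Real.sq_sqrt hx]; ring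

lemma int_logsq (n : ℕ) : IntervalIntegrable (fun x : ℝ => x^n * Real.log x ^ 2) volume 0 1 ∧
    ∫ x in (0:ℝ)..1, x^n * Real.log x ^ 2 = 2/((n:ℝ)+1)^3 := by
  set F : ℝ → ℝ := fun x => x^n * (x * Real.log x^2) / ((n:ℝ)+1) - 2 * (x^n * (x * Real.log x)) / ((n:ℝ)+1)^2 + 2 * x^(n+1) / ((n:ℝ)+1)^3 with hF
  have hc : ContinuousOn F (Set.Icc 0 1) := by
    have h1 := continuousOn_mul_logsq.mono (Set.Icc_subset_Ici_self : Set.Icc (0:ℝ) 1 ⊆ _)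
    have h2 := Real.continuous_mul_log.continuousOn (s := Set.Icc 0 1)
    have h3 := (continuous_pow n (M := ℝ)).continuousOn (s := Set.Icc 0 1)
    exact (((h3.mul h1).div_const ((n:ℝ)+1)).sub ((((h3.mul h2).const_mul 2)).div_const (((n:ℝ)+1)^2))).add
      ((((continuous_pow (n+1) (M := ℝ)).continuousOn).const_mul 2).div_const (((n:ℝ)+1)^3)) |>.congr fun x _ => by simp [hF]
  have hd : ∀ x ∈ Set.Ioo (0:ℝ) 1, HasDerivAt F (x^n * Real.log x ^ 2) x := by
    intro x hx
    have hl := Real.hasDerivAt_log hx.1.ne'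
    have hp := hasDerivAt_pow (n+1) x
    have h := (((hp.mul (hl.pow 2)).div_const ((n:ℝ)+1)).sub (((hp.mul hl).const_mul 2).div_const (((n:ℝ)+1)^2))).add
      ((hp.const_mul 2).div_const (((n:ℝ)+1)^3))
    refine hd_congr h (fun y => ?_) ?_
    · simp [hF]; ring
    · have := hx.1.ne'
      simp; field_simp; ring
  have hi : IntervalIntegrable (fun x : ℝ => x^n * Real.log x ^ 2) volume 0 1 := by
    apply intervalIntegral.intervalIntegrable_deriv_of_nonneg (g := F)
    · rwa [Set.uIcc_of_le zero_le_one]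
    · simpa using hd
    · intro x hx; simp at hx; have := hx.1.le; positivity
  refine ⟨hi, ?_⟩
  rw [intervalIntegral.integral_eq_sub_of_hasDerivAt_of_le (f := F) zero_le_one hc hd hi]
  simp [hF]

lemma hasSum_logsq_one_sub (x : ℝ) (h0 : 0 ≤ x) (h1 : x < 1) :
    HasSum (fun p : ℕ × ℕ => x^(p.1+1)/((p.1:ℝ)+1) * (x^(p.2+1)/((p.2:ℝ)+1))) (Real.log (1-x)^2) := by
  have h := Real.hasSum_pow_div_log_of_abs_lt_one (x := x) (by rw [abs_of_nonneg h0]; exact h1)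
  have hs : Summable (fun p : ℕ × ℕ => x^(p.1+1)/((p.1:ℝ)+1) * (x^(p.2+1)/((p.2:ℝ)+1))) :=
    h.summable.mul_of_nonneg h.summable (fun _ => by positivity) (fun _ => by positivity)
  have h2 := h.mul h hs
  exact hs_congr h2 (fun _ => rfl) (by ring)

lemma J_eq : ∫ x in Set.Ioo (0:ℝ) 1, Real.log x^2 * Real.log (1-x)^2 / x = 8 * zeta 5 - 2/3 * Real.pi^2 * zeta 3 := by
  set F : ℕ × ℕ → ℝ → ℝ := fun p x => 1/(((p.1:ℝ)+1) * ((p.2:ℝ)+1)) * (x^(p.1+p.2+1) * Real.log x^2) with hF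
  have hintg : ∀ p, Integrable (F p) (volume.restrict (Set.Ioo 0 1)) := by
    intro p
    apply Integrable.const_mul
    have := (int_logsq (p.1+p.2+1)).1
    rw [intervalIntegrable_iff_integrableOn_Ioo_of_le zero_le_one] at this
    exact this
  have hval : ∀ p, ∫ x in Set.Ioo (0:ℝ) 1, F p x = 2 * tt 1 1 3 p := by
    intro p
    simp only [hF]
    rw [integral_const_mul, ← integral_Ioc_eq_integral_Ioo, ← intervalIntegral.integral_of_le zero_le_one, (int_logsq _).2]
    unfold tt; push_cast; field_simp; ring
  have hnorm : ∀ p, ∫ x in Set.Ioo (0:ℝ) 1, ‖F p x‖ = 2 * tt 1 1 3 p := by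
    intro p
    rw [← hval p]
    apply setIntegral_congr_fun measurableSet_Ioo
    intro x hx
    have := hx.1.le
    simp only [hF]
    rw [Real.norm_of_nonneg]; positivity
  have h := hasSum_integral_of_summable_integral_norm hintg (by simp only [hnorm]; exact summable_tt113.mul_left 2)
  simp only [hval] at h
  have h2 := h.unique (summable_tt113.hasSum.mul_left 2)
  have h3 : ∫ x in Set.Ioo (0:ℝ) 1, ∑' p, F p x = ∫ x in Set.Ioo (0:ℝ) 1, Real.log x^2 * Real.log (1-x)^2 / x := by
    apply setIntegral_congr_fun measurableSet_Ioo
    intro x hx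
    have hx0 := hx.1.ne'
    have := (hasSum_logsq_one_sub x hx.1.le hx.2).mul_left (Real.log x^2 / x)
    refine (hs_congr this (fun p => ?_) ?_).tsum_eq
    · simp only [hF]; field_simp; ring
    · ring
  rw [← h3, h2, T113, zeta_two]; ring

end Z11
open Filter Topology MeasureTheory
namespace Z11

noncomputable def cb (n : ℕ) : ℝ := (Nat.centralBinom n : ℝ)

lemma cb_succ (n : ℕ) : cb (n+1) = cc n := by
  unfold cb cc; rw [Nat.centralBinom_eq_two_mul_choose]

lemma cb_pos (n : ℕ) : 0 < cb n := by unfold cb; exact_mod_cast Nat.centralBinom_pos n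

lemma cb_rec (n : ℕ) : ((n:ℝ)+1) * cc n = 2 * (2*n+1) * cb n := by
  rw [← cb_succ]; unfold cb; exact_mod_cast Nat.succ_mul_centralBinom_succ n

lemma cb_ge (n : ℕ) : (2:ℝ)^n ≤ cb n := by
  cases n with
  | zero => simp [cb]
  | succ n => rw [cb_succ]; exact cc_ge n

noncomputable def Pp (n : ℕ) (x : ℝ) : ℝ :=
  ∑ k ∈ Finset.range n, 4 * Real.cos x * (2 * Real.sin x)^(2*k+1) / (((k:ℝ)+1) * cc k)

noncomputable def gg (n : ℕ) (x : ℝ) : ℝ :=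
  ∑ k ∈ Finset.range n, (2 * Real.sin x)^(2*(k+1)) / (((k:ℝ)+1)^2 * cc k)

lemma hasDerivAt_v (m : ℕ) (x : ℝ) : HasDerivAt (fun x => (2 * Real.sin x)^(m+1)) ((m+1) * (2*Real.sin x)^m * (2 * Real.cos x)) x := by
  have := ((Real.hasDerivAt_sin x).const_mul 2).pow (m+1)
  exact hd_congr this (fun y => rfl) (by push_cast; simp)

lemma hasDerivAt_Pp (n : ℕ) (x : ℝ) : HasDerivAt (Pp n) (4 - 4 * (2*Real.sin x)^(2*n) / cb n) x := by
  induction n with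
  | zero =>
    exact hd_congr (hasDerivAt_const x 0) (fun y => by simp [Pp]) (by simp [cb])
  | succ n ih =>
    have h1 := (((Real.hasDerivAt_cos x).const_mul 4).mul (hasDerivAt_v (2*n) x)).div_const (((n:ℝ)+1) * cc n)
    refine hd_congr (ih.add h1) (fun y => ?_) ?_
    · simp [Pp, Finset.sum_range_succ]
    · rw [cb_succ]
      have hc := cb_rec n
      have h2 := cb_pos n
      have h3 := cc_pos n
      have hc2 : Real.cos x^2 = 1 - Real.sin x^2 := by rw [← Real.sin_sq_add_cos_sq x]; ring
      have e1 : cc n = 2 * (2*n+1) * cb n / ((n:ℝ)+1) := by rw [eq_div_iff (by positivity)]; linarith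
      have e2 : 4 * Real.cos x * ((↑(2*n)+1) * (2*Real.sin x)^(2*n) * (2*Real.cos x)) = 8 * (2*n+1) * (2*Real.sin x)^(2*n) * Real.cos x^2 := by
        push_cast; ring
      rw [e2, hc2, e1]
      have e3 : (2*Real.sin x)^(2*(n+1)) = (2*Real.sin x)^(2*n) * (4 * Real.sin x^2) := by
        rw [show 2*(n+1) = 2*n+2 by ring, pow_add]; ring
      rw [e3, pow_succ _ (2*n)]
      set y := (2*Real.sin x)^(2*n)
      field_simp
      ring

lemma hasDerivAt_gg (n : ℕ) (x : ℝ) : HasDerivAt (gg n) (Pp n x) x := by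
  unfold gg Pp
  apply HasDerivAt.fun_sum
  intro k _
  have h1 := (hasDerivAt_v (2*k+1) x).div_const (((k:ℝ)+1)^2 * cc k)
  refine hd_congr h1 (fun y => by ring_nf) ?_
  have := cc_pos k
  push_cast; field_simp; ring

lemma v_mem (x : ℝ) (h0 : 0 ≤ x) (h1 : x ≤ Real.pi/6) : 0 ≤ 2*Real.sin x ∧ 2 * Real.sin x ≤ 1 := by
  have hp := Real.pi_pos
  constructor
  · have := Real.sin_nonneg_of_nonneg_of_le_pi h0 (by linarith); linarith
  · have := Real.sin_le_sin_of_le_of_le_pi_div_two (by linarith) (by linarith) h1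
    rw [Real.sin_pi_div_six] at this; linarith

lemma Pp_bound (n : ℕ) (x : ℝ) (hx : x ∈ Set.Icc 0 (Real.pi/6)) : |4*x - Pp n x| ≤ 4/2^n := by
  have hp := Real.pi_pos
  have hp4 := Real.pi_le_four
  have := norm_image_sub_le_of_norm_deriv_le_segment' (f := fun x => 4*x - Pp n x) (a := 0) (b := Real.pi/6)
    (f' := fun x => 4 * (2*Real.sin x)^(2*n) / cb n) (C := 4/2^n)
    (fun x _ => (hd_congr (((hasDerivAt_id x).const_mul 4).sub (hasDerivAt_Pp n x)) (fun y => rfl) (by ring)).hasDerivWithinAt)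
    (fun x hx => by
      have hv := v_mem x hx.1 hx.2.le
      have hv0 := hv.1
      have hcb := cb_pos n
      rw [Real.norm_of_nonneg (by positivity)]
      have h1 : (2*Real.sin x)^(2*n) ≤ 1 := pow_le_one₀ hv.1 hv.2
      have h2 := cb_ge n
      calc 4 * (2*Real.sin x)^(2*n) / cb n ≤ 4 * 1 / 2^n := by gcongr
        _ = _ := by ring) x hx
  simp only [Pp, Real.norm_eq_abs] at this ⊢
  simp only [mul_zero, Real.sin_zero, sub_zero, pow_succ, zero_div, Finset.sum_const_zero] at this ⊢
  refine this.trans ?_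
  have : x ≤ 1 := by linarith [hx.2]
  calc 4/2^n*x ≤ 4/2^n*1 := by gcongr
    _ = _ := by ring

lemma gg_bound (n : ℕ) (x : ℝ) (hx : x ∈ Set.Icc 0 (Real.pi/6)) : |2*x^2 - gg n x| ≤ 4/2^n := by
  have hp := Real.pi_pos
  have hp4 := Real.pi_le_four
  have := norm_image_sub_le_of_norm_deriv_le_segment' (f := fun x => 2*x^2 - gg n x) (a := 0) (b := Real.pi/6)
    (f' := fun x => 4*x - Pp n x) (C := 4/2^n)
    (fun x _ => (hd_congr (((hasDerivAt_pow 2 x).const_mul 2).sub (hasDerivAt_gg n x)) (fun y => rfl) (by norm_num; ring)).hasDerivWithinAt)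
    (fun x hx => Pp_bound n x ⟨hx.1, hx.2.le⟩) x hx
  simp only [gg, Real.norm_eq_abs] at this ⊢
  simp only [mul_zero, Real.sin_zero, sub_zero, mul_add, pow_succ, mul_one, zero_div, Finset.sum_const_zero] at this ⊢
  refine this.trans ?_
  have : x ≤ 1 := by linarith [hx.2]
  calc 4/2^n*x ≤ 4/2^n*1 := by gcongr
    _ = _ := by ring

lemma hasSum_arcsin (x : ℝ) (hx : x ∈ Set.Icc 0 (Real.pi/6)) :
    HasSum (fun k : ℕ => (2 * Real.sin x)^(2*(k+1)) / (((k:ℝ)+1)^2 * cc k)) (2*x^2) := by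
  have hv := (v_mem x hx.1 hx.2).1
  rw [hasSum_iff_tendsto_nat_of_nonneg (fun i => by have := cc_pos i; positivity)]
  rw [tendsto_iff_norm_sub_tendsto_zero]
  refine squeeze_zero (fun _ => norm_nonneg _) (fun n => ?_) (g := fun n : ℕ => 4 * (1/2:ℝ)^n) ?_
  · have := gg_bound n x hx
    rw [Real.norm_eq_abs, abs_sub_comm]
    refine this.trans (le_of_eq ?_)
    simp; ring
  · have := (tendsto_pow_atTop_nhds_zero_of_lt_one (by norm_num : (0:ℝ) ≤ 1/2) (by norm_num)).const_mul 4
    simpa using this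
end Z11
open Filter Topology MeasureTheory
namespace Z11

lemma image_v : (fun x => 2 * Real.sin x) '' (Set.Ioo 0 (Real.pi/6)) = Set.Ioo 0 1 := by
  have hp := Real.pi_pos
  have hm : StrictMonoOn (fun x => 2 * Real.sin x) (Set.Icc 0 (Real.pi/6)) := by
    intro a ha b hb hab
    have := Real.strictMonoOn_sin (a := a) (b := b) ⟨by linarith [ha.1], by linarith [ha.2]⟩ ⟨by linarith [hb.1], by linarith [hb.2]⟩ hab
    simp only []; linarith
  apply Set.Subset.antisymm
  · rintro _ ⟨x, hx, rfl⟩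
    have h1 := hm ⟨le_rfl, by positivity⟩ ⟨hx.1.le, hx.2.le⟩ hx.1
    have h2 := hm ⟨hx.1.le, hx.2.le⟩ ⟨by positivity, le_rfl⟩ hx.2
    simp only [Real.sin_zero, Real.sin_pi_div_six] at h1 h2
    exact ⟨by simpa using h1, by norm_num at h2 ⊢; exact h2⟩
  · have := intermediate_value_Ioo (a := 0) (b := Real.pi/6) (by positivity) (f := fun x => 2 * Real.sin x) (by fun_prop)
    simp only [Real.sin_zero, Real.sin_pi_div_six] at this
    norm_num at this ⊢; exact this

lemma change_v (f : ℝ → ℝ) : ∫ v in Set.Ioo (0:ℝ) 1, f v = ∫ x in Set.Ioo 0 (Real.pi/6), 2 * Real.cos x * f (2 * Real.sin x) := by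
  have hp := Real.pi_pos
  rw [← image_v, integral_image_eq_integral_abs_deriv_smul (f' := fun x => 2 * Real.cos x) measurableSet_Ioo]
  · apply setIntegral_congr_fun measurableSet_Ioo
    intro x hx
    have := Real.cos_nonneg_of_mem_Icc (x := x) ⟨by linarith [hx.1], by linarith [hx.2]⟩
    simp only [smul_eq_mul]
    rw [abs_of_nonneg (by positivity)]
  · intro x _; exact ((Real.hasDerivAt_sin x).const_mul 2).hasDerivWithinAt
  · intro a ha b hb hab
    have : Real.sin a = Real.sin b := by simpa using hab
    exact Real.strictMonoOn_sin.injOn ⟨by linarith [ha.1], by linarith [ha.2]⟩ ⟨by linarith [hb.1], by linarith [hb.2]⟩ this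

lemma g5_int : g5 = ∫ x in Set.Ioo 0 (Real.pi/6), 8 * x^2 * el x^2 * (Real.cos x / Real.sin x) := by
  have hp := Real.pi_pos
  set F : ℕ → ℝ → ℝ := fun k v => 4/(((k:ℝ)+1)^2 * cc k) * (v^(2*k+1) * Real.log v^2) with hF
  have hintg : ∀ p, Integrable (F p) (volume.restrict (Set.Ioo 0 1)) := by
    intro p
    apply Integrable.const_mul
    have := (int_logsq (2*p+1)).1
    rw [intervalIntegrable_iff_integrableOn_Ioo_of_le zero_le_one] at this
    exact this
  have hval : ∀ p, ∫ x in Set.Ioo (0:ℝ) 1, F p x = 1/(((p:ℝ)+1)^5 * cc p) := by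
    intro p
    have := cc_pos p
    simp only [hF]
    rw [integral_const_mul, ← integral_Ioc_eq_integral_Ioo, ← intervalIntegral.integral_of_le zero_le_one, (int_logsq _).2]
    push_cast; field_simp; ring
  have hnorm : ∀ p, ∫ x in Set.Ioo (0:ℝ) 1, ‖F p x‖ = 1/(((p:ℝ)+1)^5 * cc p) := by
    intro p
    rw [← hval p]
    apply setIntegral_congr_fun measurableSet_Ioo
    intro x hx
    have := hx.1.le
    have := cc_pos p
    simp only [hF]
    rw [Real.norm_of_nonneg]; positivity
  have h := hasSum_integral_of_summable_integral_norm hintg (by simp only [hnorm]; exact hasSum_g5.summable)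
  simp only [hval] at h
  rw [hasSum_g5.unique h, change_v]
  apply setIntegral_congr_fun measurableSet_Ioo
  intro x hx
  have hs : 0 < Real.sin x := Real.sin_pos_of_pos_of_lt_pi hx.1 (by linarith [hx.2])
  have h1 := (hasSum_arcsin x ⟨hx.1.le, hx.2.le⟩).mul_left (4 * el x^2 / (2 * Real.sin x))
  have h2 : HasSum (fun k => F k (2*Real.sin x)) (4 * el x^2 / (2 * Real.sin x) * (2*x^2)) := by
    refine hs_congr h1 (fun k => ?_) rfl
    have := cc_pos k
    simp only [hF, el]
    rw [show 2*(k+1) = (2*k+1)+1 by ring, pow_succ _ (2*k+1)]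
    field_simp
  simp only []
  rw [h2.tsum_eq]; field_simp; ring
end Z11
open Filter Topology MeasureTheory
namespace Z11

noncomputable def DD : Set ℂ := Metric.ball (1/2 + Complex.I) (Real.sqrt 5 / 2)

lemma mem_DD (w : ℂ) : w ∈ DD ↔ w.re^2 + w.im^2 < w.re + 2 * w.im := by
  unfold DD
  rw [Metric.mem_ball, Complex.dist_eq, ← sq_lt_sq₀ (norm_nonneg _) (by positivity), Complex.sq_norm, Complex.normSq_apply, div_pow, Real.sq_sqrt (by norm_num)]
  simp
  constructor <;> intro h <;> nlinarith

lemma isOpen_DD : IsOpen DD := Metric.isOpen_ball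

lemma DD_slit (w : ℂ) (hw : w ∈ DD) : w ∈ Complex.slitPlane ∧ 1 - w ∈ Complex.slitPlane := by
  rw [mem_DD] at hw
  simp only [Complex.mem_slitPlane_iff, Complex.sub_re, Complex.sub_im, Complex.one_re, Complex.one_im]
  by_cases h : w.im = 0
  · rw [h] at hw
    have h0 : 0 < w.re := by nlinarith
    have h1 : w.re < 1 := by nlinarith
    exact ⟨Or.inl h0, Or.inl (by linarith)⟩
  · exact ⟨Or.inr h, Or.inr (by simpa using h)⟩

lemma DD_norm (w : ℂ) (hw : w ∈ DD) : ‖w‖ ≤ 4 ∧ ‖1 - w‖ ≤ 4 := by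
  rw [mem_DD] at hw
  constructor
  · rw [← sq_le_sq₀ (norm_nonneg _) (by positivity), Complex.sq_norm, Complex.normSq_apply]
    nlinarith [sq_nonneg (w.re - 1), sq_nonneg (w.im - 2)]
  · rw [← sq_le_sq₀ (norm_nonneg _) (by positivity), Complex.sq_norm, Complex.normSq_apply]
    simp
    nlinarith [sq_nonneg (w.re - 1), sq_nonneg (w.im - 2),sq_nonneg (w.re +1)]

lemma norm_log_le (w : ℂ) : ‖Complex.log w‖ ≤ |Real.log ‖w‖| + 4 := by
  have h1 := Complex.norm_le_abs_re_add_abs_im (Complex.log w)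
  rw [Complex.log_re, Complex.log_im] at h1
  have := Complex.abs_arg_le_pi w
  have := Real.pi_le_four
  linarith

lemma bdA (a : ℝ) (h0 : 0 < a) (h1 : a ≤ 4) : a * (|Real.log a| + 4)^2 ≤ 200 := by
  rcases le_total a 1 with h | h
  · have hs : 0 < Real.sqrt a := Real.sqrt_pos.mpr h0
    have hs1 : Real.sqrt a ≤ 1 := Real.sqrt_le_one.mpr h
    have := Real.abs_log_mul_self_lt _ hs hs1
    rw [Real.log_sqrt h0.le] at this
    have h2 : (Real.log a/2*Real.sqrt a)^2 < 1 := by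
      rw [sq_lt_one_iff_abs_lt_one]; exact this
    rw [mul_pow, Real.sq_sqrt h0.le] at h2
    have h3 : |Real.log a|^2 = Real.log a^2 := sq_abs _
    nlinarith [sq_nonneg (|Real.log a| - 4)]
  · have h2 := Real.log_le_sub_one_of_pos h0
    have h3 := Real.log_nonneg h
    rw [abs_of_nonneg h3]
    have : (Real.log a + 4)^2 ≤ 7^2 := by apply pow_le_pow_left₀ <;> linarith
    nlinarith

lemma bdB (a : ℝ) (h0 : 1/2 ≤ a) (h1 : a ≤ 4) : (|Real.log a| + 4)^2 ≤ 49 := by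
  have h2 := Real.log_le_sub_one_of_pos (by linarith : 0 < a)
  have h3 := Real.one_sub_inv_le_log_of_pos (by linarith : 0 < a)
  have h4 : a⁻¹ ≤ 2 := by rw [inv_le_comm₀ (by linarith) (by norm_num)]; linarith
  have : |Real.log a| ≤ 3 := by rw [abs_le]; constructor <;> linarith
  have h6 : (|Real.log a| + 4)^2 ≤ 7^2 := by apply pow_le_pow_left₀ <;> [positivity; linarith]
  linarith

noncomputable def f2 (w : ℂ) : ℂ := Complex.log w^2 * Complex.log (1-w)^2 / w

lemma f2_bound (w : ℂ) (hw : w ∈ DD) : ‖f2 w‖ ≤ 5000 := by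
  obtain ⟨hs, hs'⟩ := DD_slit w hw
  obtain ⟨hn, hn'⟩ := DD_norm w hw
  have ha : 0 < ‖w‖ := norm_pos_iff.mpr (Complex.slitPlane_ne_zero hs)
  have hb : 0 < ‖1-w‖ := norm_pos_iff.mpr (Complex.slitPlane_ne_zero hs')
  have hL := norm_log_le w
  have hL' := norm_log_le (1-w)
  unfold f2
  rw [norm_div, norm_mul, norm_pow, norm_pow, div_le_iff₀ ha]
  set a := ‖w‖
  set b := ‖1-w‖
  have hLs : ‖Complex.log w‖^2 ≤ (|Real.log a| + 4)^2 := pow_le_pow_left₀ (norm_nonneg _) hL 2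
  have hLs' : ‖Complex.log (1-w)‖^2 ≤ (|Real.log b| + 4)^2 := pow_le_pow_left₀ (norm_nonneg _) hL' 2
  rcases le_total a (1/2) with h | h
  · have h1 : ‖Complex.log (1-w)‖ ≤ 3/2*a := by
      have := Complex.norm_log_one_add_half_le_self (z := -w) (by rw [norm_neg]; exact h)
      rw [norm_neg, ← sub_eq_add_neg] at this; exact this
    have h2 : ‖Complex.log (1-w)‖^2 ≤ (3/2*a)^2 := pow_le_pow_left₀ (norm_nonneg _) h1 2
    have h3 := bdA a ha hn
    calc ‖Complex.log w‖^2 * ‖Complex.log (1-w)‖^2 ≤ (|Real.log a| + 4)^2 * (3/2*a)^2 := by gcongr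
      _ = a * (9/4 * (a * (|Real.log a| + 4)^2)) := by ring
      _ ≤ a * (9/4 * 200) := by gcongr
      _ ≤ _ := by nlinarith
  · rcases le_total b (1/2) with h' | h'
    · have h1 : ‖Complex.log w‖ ≤ 3/2*b := by
        have := Complex.norm_log_one_add_half_le_self (z := -(1-w)) (by rw [norm_neg]; exact h')
        rw [norm_neg, ← sub_eq_add_neg, sub_sub_cancel] at this; exact this
      have h2 : ‖Complex.log w‖^2 ≤ (3/2*b)^2 := pow_le_pow_left₀ (norm_nonneg _) h1 2
      have h3 := bdA b hb hn'
      calc ‖Complex.log w‖^2 * ‖Complex.log (1-w)‖^2 ≤ (3/2*b)^2 * (|Real.log b| + 4)^2 := by gcongr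
        _ = b * (9/4 * (b * (|Real.log b| + 4)^2)) := by ring
        _ ≤ b * (9/4 * 200) := by gcongr
        _ ≤ _ := by nlinarith
    · have h1 := bdB a h hn
      have h2 := bdB b h' hn'
      calc ‖Complex.log w‖^2 * ‖Complex.log (1-w)‖^2 ≤ 49 * 49 := by gcongr <;> linarith
        _ ≤ _ := by nlinarith

lemma f2_diff : DifferentiableOn ℂ f2 DD := by
  intro w hw
  obtain ⟨hs, hs'⟩ := DD_slit w hw
  have h0 := Complex.slitPlane_ne_zero hs
  unfold f2
  have h1 : DifferentiableAt ℂ (fun w => Complex.log w) w := Complex.differentiableAt_log hs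
  have h2 : DifferentiableAt ℂ (fun w : ℂ => Complex.log (1-w)) w :=
    DifferentiableAt.clog (by fun_prop) hs'
  exact (((h1.pow 2).mul (h2.pow 2)).div differentiableAt_id h0).differentiableWithinAt

lemma exists_prim : ∃ g : ℂ → ℂ, Continuous g ∧ ∀ w ∈ DD, HasDerivAt g (f2 w) w := by
  obtain ⟨F, hF⟩ := f2_diff.isExactOn_ball
  have hL : LipschitzOnWith 5000 F DD := by
    apply Convex.lipschitzOnWith_of_nnnorm_hasDerivWithin_le (𝕜 := ℂ) (f' := f2) (convex_ball _ _)
    · intro x hx; exact (hF x hx).hasDerivWithinAt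
    · intro x hx; rw [← NNReal.coe_le_coe]; exact f2_bound x hx
  obtain ⟨g, hg, hgF⟩ := hL.extend_finite_dimension
  refine ⟨g, hg.continuous, fun w hw => ?_⟩
  refine (hF w hw).congr_of_eventuallyEq ?_
  filter_upwards [isOpen_DD.mem_nhds hw] with y hy
  exact (hgF hy).symm

lemma path_int (g : ℂ → ℂ) (hg : Continuous g) (hgd : ∀ w ∈ DD, HasDerivAt g (f2 w) w)
    (γ γ' : ℝ → ℂ) (a b : ℝ) (hab : a ≤ b) (hc : Continuous γ) (hc' : Continuous γ')
    (hd : ∀ t ∈ Set.Ioo a b, HasDerivAt γ (γ' t) t) (hm : ∀ t ∈ Set.Ioo a b, γ t ∈ DD) :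
    IntervalIntegrable (fun t => f2 (γ t) * γ' t) volume a b ∧
    ∫ t in a..b, f2 (γ t) * γ' t = g (γ b) - g (γ a) := by
  have hi : IntervalIntegrable (fun t => f2 (γ t) * γ' t) volume a b := by
    have h1 : IntegrableOn (fun t => f2 (γ t)) (Set.Ioo a b) := by
      refine IntegrableOn.of_bound (C := 5000) (by simp) ?_ ?_
      · apply ContinuousOn.aestronglyMeasurable _ measurableSet_Ioo
        exact f2_diff.continuousOn.comp hc.continuousOn hm
      · filter_upwards [ae_restrict_mem measurableSet_Ioo] with t ht
        exact f2_bound _ (hm t ht)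
    rw [← intervalIntegrable_iff_integrableOn_Ioo_of_le hab] at h1
    exact h1.mul_continuousOn hc'.continuousOn
  refine ⟨hi, ?_⟩
  apply intervalIntegral.integral_eq_sub_of_hasDerivAt_of_le (f := fun t => g (γ t)) hab
  · exact (hg.comp hc).continuousOn
  · intro t ht
    exact (hgd _ (hm t ht)).comp_of_eq t (hd t ht) rfl
  · exact hi
end Z11
open Filter Topology MeasureTheory
namespace Z11

noncomputable def ee (t : ℝ) : ℂ := Complex.exp (t * Complex.I)

lemma ee_re (t : ℝ) : (ee t).re = Real.cos t := Complex.exp_ofReal_mul_I_re t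
lemma ee_im (t : ℝ) : (ee t).im = Real.sin t := Complex.exp_ofReal_mul_I_im t
lemma ee_ne (t : ℝ) : ee t ≠ 0 := Complex.exp_ne_zero _
lemma ee_log (t : ℝ) (h0 : -Real.pi < t) (h1 : t ≤ Real.pi) : Complex.log (ee t) = t * Complex.I := by
  unfold ee; apply Complex.log_exp <;> simpa
lemma continuous_ee : Continuous ee := by unfold ee; fun_prop
lemma hasDerivAt_ee (c d t : ℝ) : HasDerivAt (fun t : ℝ => ee (c*t+d)) (c * Complex.I * ee (c*t+d)) t := by
  unfold ee
  have h1 : HasDerivAt (fun t : ℝ => ((c*t+d : ℝ) : ℂ)) (c:ℂ) t := by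
    have : HasDerivAt (fun t : ℝ => c*t+d) c t := by simpa using ((hasDerivAt_id t).const_mul c).add_const d
    exact this.ofReal_comp
  have h2 := (h1.mul_const Complex.I).cexp
  rw [mul_comm]; exact h2

lemma ee_one_sub_neg (x : ℝ) : 1 - ee (-2*x) = ((2 * Real.sin x : ℝ) : ℂ) * ee (Real.pi/2 - x) := by
  apply Complex.ext
  · rw [Complex.re_ofReal_mul, Complex.sub_re, ee_re, ee_re, Real.cos_pi_div_two_sub, neg_mul, Real.cos_neg, Complex.one_re, Real.cos_two_mul, Real.cos_sq']; ring
  · rw [Complex.im_ofReal_mul, Complex.sub_im, ee_im, ee_im, Real.sin_pi_div_two_sub, neg_mul, Real.sin_neg, Complex.one_im, Real.sin_two_mul]; ring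

lemma ee_one_sub (x : ℝ) : 1 - ee (2*x) = ((2 * Real.sin x : ℝ) : ℂ) * ee (x - Real.pi/2) := by
  apply Complex.ext
  · rw [Complex.re_ofReal_mul, Complex.sub_re, ee_re, ee_re, Real.cos_sub_pi_div_two, Complex.one_re, Real.cos_two_mul, Real.cos_sq']; ring
  · rw [Complex.im_ofReal_mul, Complex.sub_im, ee_im, ee_im, Real.sin_sub_pi_div_two, Complex.one_im, Real.sin_two_mul]; ring

lemma log_one_sub_neg (x : ℝ) (h0 : 0 < x) (h1 : x < Real.pi) :
    Complex.log (1 - ee (-2*x)) = el x + ((Real.pi/2 - x : ℝ):ℂ) * Complex.I := by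
  have hs := Real.sin_pos_of_pos_of_lt_pi h0 h1
  rw [ee_one_sub_neg, Complex.log_ofReal_mul (by positivity) (ee_ne _), ee_log _ (by linarith) (by linarith)]
  rfl

lemma log_one_sub (x : ℝ) (h0 : 0 < x) (h1 : x < Real.pi) :
    Complex.log (1 - ee (2*x)) = el x - ((Real.pi/2 - x : ℝ):ℂ) * Complex.I := by
  have hs := Real.sin_pos_of_pos_of_lt_pi h0 h1
  rw [ee_one_sub, Complex.log_ofReal_mul (by positivity) (ee_ne _), ee_log _ (by linarith) (by linarith)]
  simp [el]; ring

lemma sin_lt_two_cos (x : ℝ) (h0 : 0 < x) (h1 : x ≤ Real.pi/4) : 0 < Real.sin x ∧ Real.sin x < 2 * Real.cos x := by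
  have hp := Real.pi_pos
  have hs := Real.sin_pos_of_pos_of_lt_pi h0 (by linarith)
  have h2 := Real.sin_le_sin_of_le_of_le_pi_div_two (by linarith) (by linarith) h1
  have h3 := Real.cos_le_cos_of_nonneg_of_le_pi h0.le (by linarith) h1
  rw [Real.sin_pi_div_four] at h2
  rw [Real.cos_pi_div_four] at h3
  exact ⟨hs, by linarith⟩

lemma ee_mem (x : ℝ) (h0 : 0 < x) (h1 : x ≤ Real.pi/4) : ee (2*x) ∈ DD := by
  obtain ⟨h2, h3⟩ := sin_lt_two_cos x h0 h1
  rw [mem_DD, ee_re, ee_im, Real.cos_sq_add_sin_sq, Real.cos_two_mul, Real.sin_two_mul, Real.cos_sq']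
  nlinarith

lemma ee_mem' (x : ℝ) (h0 : 0 < x) (h1 : x ≤ Real.pi/4) : 1 - ee (-2*x) ∈ DD := by
  obtain ⟨h2, h3⟩ := sin_lt_two_cos x h0 h1
  rw [mem_DD, Complex.sub_re, Complex.sub_im, ee_re, ee_im, neg_mul, Real.cos_neg, Real.sin_neg, Complex.one_re, Complex.one_im,  Real.cos_two_mul, Real.sin_two_mul, Real.cos_sq']
  have := Real.cos_sq' x
  nlinarith [mul_pos h2 (sub_pos.mpr h3)]

lemma contour : IntervalIntegrable (fun x => x^2 * el x^2 * (Real.cos x / Real.sin x)) volume 0 (Real.pi/6) ∧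
   ∫ x in (0:ℝ)..(Real.pi/6), x^2 * el x^2 * (Real.cos x / Real.sin x) =
    - (8 * zeta 5 - 2/3 * Real.pi^2 * zeta 3) / 4 + (∫ x in (0:ℝ)..(Real.pi/6), x^2 * (Real.pi/2-x)^2 * (Real.cos x / Real.sin x))
     + 2 * ∫ x in (0:ℝ)..(Real.pi/6), x^2 * (Real.pi/2-x) * el x := by
  have hp := Real.pi_pos
  obtain ⟨g, hg, hgd⟩ := exists_prim
  have hi1 : IntervalIntegrable (fun x => x^2 * (Real.pi/2-x)^2 * (Real.cos x / Real.sin x)) volume 0 (Real.pi/6) :=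
    (intervalIntegrable_cot (fun x => x * (Real.pi/2-x)^2) (by fun_prop) (Real.pi/6) (by positivity) (by linarith)).congr
      (fun x _ => by ring)
  have hi2 : IntervalIntegrable (fun x => x^2 * (Real.pi/2-x) * el x) volume 0 (Real.pi/6) :=
    (intervalIntegrable_el 0 (Real.pi/6)).continuousOn_mul (by fun_prop)
  have hJ := path_int g hg hgd (fun t => (t:ℂ)) (fun _ => 1) 0 1 zero_le_one (by fun_prop) (by fun_prop)
    (fun t _ => by simpa using (hasDerivAt_id t).ofReal_comp)
    (fun t ht => by rw [mem_DD]; simp; nlinarith [ht.1, ht.2])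
  have hJ2 : (g 1 - g 0).re = 8 * zeta 5 - 2/3 * Real.pi^2 * zeta 3 := by
    have h1 := hJ.2
    simp only [Complex.ofReal_one, Complex.ofReal_zero] at h1
    rw [← h1, ← J_eq, intervalIntegral.integral_of_le zero_le_one, integral_Ioc_eq_integral_Ioo]
    have : ∫ t in Set.Ioo (0:ℝ) 1, f2 t * 1 = ((∫ x in Set.Ioo (0:ℝ) 1, Real.log x^2 * Real.log (1-x)^2 / x : ℝ) : ℂ) := by
      rw [← integral_complex_ofReal]
      apply setIntegral_congr_fun measurableSet_Ioo
      intro x hx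
      have h1 := Complex.ofReal_log hx.1.le
      have h2 := Complex.ofReal_log (x := 1 - x) (by linarith [hx.2])
      simp only [f2, mul_one]
      push_cast at h2 ⊢
      rw [h1, h2]
    rw [this, Complex.ofReal_re]
  have h1 := path_int g hg hgd (fun t => 1 - ee (-2*t)) (fun t => 2 * Complex.I * ee (-2*t)) 0 (Real.pi/6) (by positivity)
    (by have := continuous_ee; fun_prop) (by have := continuous_ee; fun_prop)
    (fun t _ => by simpa using (hasDerivAt_ee (-2) 0 t).const_sub 1)
    (fun t ht => ee_mem' t ht.1 (by linarith [ht.2]))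
  have h2 := path_int g hg hgd (fun t => ee (2*t)) (fun t => 2 * Complex.I * ee (2*t)) 0 (Real.pi/6) (by positivity)
    (by have := continuous_ee; fun_prop) (by have := continuous_ee; fun_prop)
    (fun t _ => by simpa using (hasDerivAt_ee 2 0 t))
    (fun t ht => ee_mem t ht.1 (by linarith [ht.2]))
  have e0 : ee 0 = 1 := by simp [ee]
  have eω : 1 - ee (-2*(Real.pi/6)) = ee (2*(Real.pi/6)) := by
    rw [ee_one_sub_neg, Real.sin_pi_div_six]; norm_num
    congr 1; ring
  simp only [mul_zero, e0, sub_self, eω] at h1 h2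
  have r1 : ∀ x ∈ Set.Ioo 0 (Real.pi/6), (f2 (1 - ee (-2*x)) * (2 * Complex.I * ee (-2*x))).re =
     -4 * (x^2 * el x^2 * (Real.cos x / Real.sin x)) + 4 * (x^2 * (Real.pi/2-x)^2 * (Real.cos x / Real.sin x))
      - 8 * (x^2 * (Real.pi/2-x) * el x) := by
    intro x hx
    have hs := Real.sin_pos_of_pos_of_lt_pi hx.1 (by linarith [hx.2])
    have hsC : ((2 * Real.sin x : ℝ) : ℂ) ≠ 0 := by exact_mod_cast (by positivity : 2 * Real.sin x ≠ 0)
    have hne : 1 - ee (-2*x) ≠ 0 := by rw [ee_one_sub_neg]; exact mul_ne_zero hsC (ee_ne _)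
    have hq : 2 * Complex.I * ee (-2*x) / (1 - ee (-2*x)) = ((Real.cos x / Real.sin x : ℝ):ℂ) - Complex.I := by
      rw [div_eq_iff hne, ee_one_sub_neg]
      have hc2 := Real.cos_sq' x
      have ea : (ee (-2*x)).re = 1 - 2 * Real.sin x^2 := by
        rw [ee_re, neg_mul, Real.cos_neg, Real.cos_two_mul, hc2]; ring
      have eb : (ee (-2*x)).im = -(2 * Real.sin x * Real.cos x) := by
        rw [ee_im, neg_mul, Real.sin_neg, Real.sin_two_mul]
      have ec : (ee (Real.pi/2-x)).re = Real.sin x := by rw [ee_re, Real.cos_pi_div_two_sub]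
      have ed : (ee (Real.pi/2-x)).im = Real.cos x := by rw [ee_im, Real.sin_pi_div_two_sub]
      have hk : Real.cos x / Real.sin x * Real.sin x = Real.cos x := by field_simp
      set k := Real.cos x / Real.sin x
      apply Complex.ext
      · rw [mul_comm ((k:ℂ) - _), mul_assoc (((2 * Real.sin x : ℝ)) : ℂ), Complex.re_ofReal_mul, Complex.mul_re, Complex.mul_re (ee (Real.pi/2-x)), ec, ed, ea, eb]
        simp
        linear_combination (-2 * Real.sin x) * hk
      · rw [mul_comm ((k:ℂ) - _), mul_assoc (((2 * Real.sin x : ℝ)) : ℂ), Complex.im_ofReal_mul, Complex.mul_im, Complex.mul_im (ee (Real.pi/2-x)), ec, ed, ea, eb]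
        simp
        linear_combination (-2 * Real.cos x) * hk - 2 * hc2
    have e1 : f2 (1 - ee (-2*x)) * (2 * Complex.I * ee (-2*x)) = (el x + ((Real.pi/2 - x : ℝ):ℂ) * Complex.I)^2 * (((-2*x:ℝ):ℂ) * Complex.I)^2 * (((Real.cos x / Real.sin x : ℝ):ℂ) - Complex.I) := by
      rw [← hq, f2, sub_sub_cancel, log_one_sub_neg x hx.1 (by linarith [hx.2]), ee_log _ (by linarith [hx.2]) (by linarith [hx.1])]
      ring
    rw [e1]
    set c := Real.cos x / Real.sin x
    set p := Real.pi/2 - x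
    simp [pow_two]
    ring
  have r2 : ∀ x ∈ Set.Ioo 0 (Real.pi/6), (f2 (ee (2*x)) * (2 * Complex.I * ee (2*x))).re = -16 * (x^2 * (Real.pi/2-x) * el x) := by
    intro x hx
    have e1 : f2 (ee (2*x)) * (2 * Complex.I * ee (2*x)) = (el x - ((Real.pi/2 - x : ℝ):ℂ) * Complex.I)^2 * (((2*x:ℝ):ℂ) * Complex.I)^2 * (2 * Complex.I) := by
      rw [f2, log_one_sub x hx.1 (by linarith [hx.2]), ee_log _ (by linarith [hx.1]) (by linarith [hx.2])]
      have := ee_ne (2*x)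
      field_simp
    rw [e1]
    set p := Real.pi/2 - x
    simp [pow_two]
    ring
  have hpi : (0:ℝ) ≤ Real.pi/6 := by positivity
  have R1 : IntervalIntegrable (fun x => (f2 (1 - ee (-2*x)) * (2 * Complex.I * ee (-2*x))).re) volume 0 (Real.pi/6) := by
    have := h1.1
    rw [intervalIntegrable_iff] at this ⊢
    exact this.re
  have R1' : ∫ x in (0:ℝ)..(Real.pi/6), (f2 (1 - ee (-2*x)) * (2 * Complex.I * ee (-2*x))).re = (g (ee (2*(Real.pi/6))) - g 0).re := by
    rw [← h1.2]
    exact Complex.reCLM.intervalIntegral_comp_comm h1.1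
  have R2' : ∫ x in (0:ℝ)..(Real.pi/6), (f2 (ee (2*x)) * (2 * Complex.I * ee (2*x))).re = (g (ee (2*(Real.pi/6))) - g 1).re := by
    rw [← h2.2]
    exact Complex.reCLM.intervalIntegral_comp_comm h2.1
  have hQ : IntervalIntegrable (fun x => x^2 * el x^2 * (Real.cos x / Real.sin x)) volume 0 (Real.pi/6) := by
    have h := ((R1.sub (hi1.const_mul 4)).add (hi2.const_mul 8)).const_mul (-1/4)
    rw [intervalIntegrable_iff_integrableOn_Ioo_of_le hpi] at h ⊢
    refine h.congr_fun (fun x hx => ?_) measurableSet_Ioo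
    have := r1 x hx
    simp only [] at this ⊢
    rw [this]; ring
  refine ⟨hQ, ?_⟩
  have S1 : ∫ x in (0:ℝ)..(Real.pi/6), (f2 (1 - ee (-2*x)) * (2 * Complex.I * ee (-2*x))).re =
     ∫ x in (0:ℝ)..(Real.pi/6), (-4 * (x^2 * el x^2 * (Real.cos x / Real.sin x)) + 4 * (x^2 * (Real.pi/2-x)^2 * (Real.cos x / Real.sin x))
      - 8 * (x^2 * (Real.pi/2-x) * el x)) := by
    rw [intervalIntegral.integral_of_le hpi, intervalIntegral.integral_of_le hpi, integral_Ioc_eq_integral_Ioo, integral_Ioc_eq_integral_Ioo]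
    exact setIntegral_congr_fun measurableSet_Ioo r1
  have S2 : ∫ x in (0:ℝ)..(Real.pi/6), (f2 (ee (2*x)) * (2 * Complex.I * ee (2*x))).re =
     ∫ x in (0:ℝ)..(Real.pi/6), -16 * (x^2 * (Real.pi/2-x) * el x) := by
    rw [intervalIntegral.integral_of_le hpi, intervalIntegral.integral_of_le hpi, integral_Ioc_eq_integral_Ioo, integral_Ioc_eq_integral_Ioo]
    exact setIntegral_congr_fun measurableSet_Ioo r2
  rw [intervalIntegral.integral_sub ((hQ.const_mul (-4)).add (hi1.const_mul 4)) (hi2.const_mul 8),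
    intervalIntegral.integral_add (hQ.const_mul (-4)) (hi1.const_mul 4), intervalIntegral.integral_const_mul, intervalIntegral.integral_const_mul, intervalIntegral.integral_const_mul] at S1
  rw [intervalIntegral.integral_const_mul] at S2
  rw [R1', Complex.sub_re] at S1
  rw [R2', Complex.sub_re] at S2
  rw [Complex.sub_re] at hJ2
  linarith
end Z11
open Filter Topology MeasureTheory
namespace Z11

lemma int_neglog (n : ℕ) : IntervalIntegrable (fun x : ℝ => x^n * (-Real.log x)) volume 0 1 ∧
    ∫ x in (0:ℝ)..1, x^n * (-Real.log x) = 1/((n:ℝ)+1)^2 := by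
  set F : ℝ → ℝ := fun x => -(x^n * (x * Real.log x)) / ((n:ℝ)+1) + x^(n+1) / ((n:ℝ)+1)^2 with hF
  have hc : ContinuousOn F (Set.Icc 0 1) := by
    have h2 := Real.continuous_mul_log
    exact Continuous.continuousOn (by fun_prop)
  have hd : ∀ x ∈ Set.Ioo (0:ℝ) 1, HasDerivAt F (x^n * (-Real.log x)) x := by
    intro x hx
    have hl := Real.hasDerivAt_log hx.1.ne'
    have hp := hasDerivAt_pow (n+1) x
    have h := ((((hp.mul hl).const_mul (-1)).div_const ((n:ℝ)+1))).add (hp.div_const (((n:ℝ)+1)^2))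
    refine hd_congr h (fun y => ?_) ?_
    · simp [hF]; ring
    · have := hx.1.ne'
      simp; field_simp; ring
  have hi : IntervalIntegrable (fun x : ℝ => x^n * (-Real.log x)) volume 0 1 := by
    apply intervalIntegral.intervalIntegrable_deriv_of_nonneg (g := F)
    · rwa [Set.uIcc_of_le zero_le_one]
    · simpa using hd
    · intro x hx; simp at hx; have := hx.1.le
      have h2 := Real.log_nonpos hx.1.le hx.2.le
      exact mul_nonneg (by positivity) (by linarith)
  refine ⟨hi, ?_⟩
  rw [intervalIntegral.integral_eq_sub_of_hasDerivAt_of_le (f := F) zero_le_one hc hd hi]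
  simp [hF]

lemma beta_int (s : ℝ) (m : ℕ) : ∀ a : ℕ, ∫ v in (0:ℝ)..s, v^a * (s-v)^m =
    (a.factorial : ℝ) * m.factorial / (a+m+1).factorial * s^(a+m+1) := by
  induction m with
  | zero =>
    intro a
    simp [Nat.factorial_succ]
    have : (a.factorial : ℝ) ≠ 0 := by positivity
    field_simp
  | succ m ih =>
    intro a
    have h1 : ∫ v in (0:ℝ)..s, (((a:ℝ)+1) * (v^a * (s-v)^(m+1)) - ((m:ℝ)+1) * (v^(a+1) * (s-v)^m)) = 0 := by
      rw [intervalIntegral.integral_eq_sub_of_hasDerivAt (f := fun v => v^(a+1) * (s-v)^(m+1))]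
      · simp
      · intro v _
        have h := (hasDerivAt_pow (a+1) v).mul (((hasDerivAt_id v).const_sub s).pow (m+1))
        refine hd_congr h (fun y => by simp) (by push_cast; simp; ring)
      · apply Continuous.intervalIntegrable; fun_prop
    rw [intervalIntegral.integral_sub (by apply Continuous.intervalIntegrable; fun_prop) (by apply Continuous.intervalIntegrable; fun_prop),
      intervalIntegral.integral_const_mul, intervalIntegral.integral_const_mul, ih (a+1)] at h1
    have h2 : ∫ v in (0:ℝ)..s, v^a * (s-v)^(m+1) = ((m:ℝ)+1) * (((a+1).factorial:ℝ) * m.factorial / (a+1+m+1).factorial * s^(a+1+m+1)) / ((a:ℝ)+1) := by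
      rw [eq_div_iff (by positivity)]; linarith
    rw [h2, show a+(m+1)+1 = a+1+m+1 by ring, Nat.factorial_succ a, Nat.factorial_succ m]
    push_cast
    field_simp

noncomputable def hh (m : ℕ) (s : ℝ) : ℝ := s^m * (-Real.log s) / s

noncomputable def FF (k m : ℕ) (z : ℝ × ℝ) : ℝ := if z.1 < z.2 then z.1^(2*k+1) * (z.2 - z.1)^m * hh m z.2 else 0

noncomputable def mu1 : Measure ℝ := volume.restrict (Set.Ioo 0 1)

instance : IsFiniteMeasure mu1 := by unfold mu1; exact ⟨by simp⟩

lemma measurable_hh (m : ℕ) : Measurable (hh m) := by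
  unfold hh
  have := Real.measurable_log
  fun_prop

lemma measurable_FF (k m : ℕ) : Measurable (FF k m) := by
  unfold FF
  have := measurable_hh m
  refine Measurable.ite (measurableSet_lt measurable_fst measurable_snd) ?_ measurable_const
  fun_prop

lemma hh_nonneg (m : ℕ) (s : ℝ) (hs : s ∈ Set.Ioo (0:ℝ) 1) : 0 ≤ hh m s := by
  unfold hh
  have := Real.log_nonpos hs.1.le hs.2.le
  have h0 := hs.1
  exact div_nonneg (mul_nonneg (by positivity) (by linarith)) h0.le

lemma FF_nonneg (k m : ℕ) (v s : ℝ) (hv : v ∈ Set.Ioo (0:ℝ) 1) (hs : s ∈ Set.Ioo (0:ℝ) 1) : 0 ≤ FF k m (v, s) := by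
  unfold FF
  split_ifs with h
  · have := hv.1.le
    have h : v < s := h
    exact mul_nonneg (mul_nonneg (by positivity) (pow_nonneg (by simp; linarith) _)) (hh_nonneg m s hs)
  · exact le_rfl

noncomputable def BB (k m : ℕ) : ℝ := ((2*k+1).factorial : ℝ) * m.factorial / (2*k+1+m+1).factorial

lemma FF_inner (k m : ℕ) (s : ℝ) (hs : s ∈ Set.Ioo (0:ℝ) 1) :
    ∫ v, FF k m (v, s) ∂mu1 = BB k m * (s^(2*k+1+2*m) * (-Real.log s)) := by
  have h1 : (fun v => FF k m (v,s)) = (Set.Iio s).indicator (fun v => (v^(2*k+1) * (s-v)^m) * hh m s) := by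
    ext v; simp [FF, Set.indicator]
  rw [h1, mu1, setIntegral_indicator measurableSet_Iio]
  have h2 : Set.Ioo (0:ℝ) 1 ∩ Set.Iio s = Set.Ioo 0 s := by
    ext x; simp only [Set.mem_inter_iff, Set.mem_Ioo, Set.mem_Iio]
    constructor
    · rintro ⟨⟨a, b⟩, c⟩; exact ⟨a, c⟩
    · rintro ⟨a, c⟩; exact ⟨⟨a, c.trans hs.2⟩, c⟩
  rw [h2, integral_mul_const, ← integral_Ioc_eq_integral_Ioo, ← intervalIntegral.integral_of_le hs.1.le, beta_int]
  have := hs.1.ne'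
  unfold hh BB
  rw [show 2*k+1+2*m = (2*k+1)+m+m by ring, pow_succ s (2*k+1+m), pow_add s (2*k+1+m) m]
  field_simp

lemma FF_int (k m : ℕ) : Integrable (FF k m) (mu1.prod mu1) := by
  rw [integrable_prod_iff' (measurable_FF k m).aestronglyMeasurable]
  have hae : ∀ᵐ s ∂mu1, s ∈ Set.Ioo (0:ℝ) 1 := ae_restrict_mem measurableSet_Ioo
  constructor
  · filter_upwards [hae] with s hs
    refine Integrable.of_bound ((measurable_FF k m).comp (by fun_prop)).aestronglyMeasurable (hh m s) ?_
    filter_upwards [hae] with v hv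
    rw [Real.norm_of_nonneg (FF_nonneg k m v s hv hs)]
    have hh0 := hh_nonneg m s hs
    unfold FF
    split_ifs with h
    · have h : v < s := h
      have h1 : v^(2*k+1) ≤ 1 := pow_le_one₀ hv.1.le hv.2.le
      have h2 : (s-v)^m ≤ 1 := pow_le_one₀ (by linarith) (by linarith [hv.1, hs.2])
      have h3 : 0 ≤ (s-v)^m := pow_nonneg (by linarith) _
      calc v^(2*k+1) * (s-v)^m * hh m s ≤ 1 * 1 * hh m s := by gcongr
        _ = _ := by ring
    · exact hh0
  · have h1 := (int_neglog (2*k+1+2*m)).1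
    rw [intervalIntegrable_iff_integrableOn_Ioo_of_le zero_le_one] at h1
    refine (Integrable.const_mul h1 (BB k m)).congr ?_
    filter_upwards [hae] with s hs
    rw [← FF_inner k m s hs]
    apply integral_congr_ae
    filter_upwards [hae] with v hv
    rw [Real.norm_of_nonneg (FF_nonneg k m v s hv hs)]

lemma FF_val (k m : ℕ) : ∫ v, ∫ s, FF k m (v, s) ∂mu1 ∂mu1 = BB k m / (2*k+2*m+2:ℝ)^2 := by
  have hae : ∀ᵐ s ∂mu1, s ∈ Set.Ioo (0:ℝ) 1 := ae_restrict_mem measurableSet_Ioo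
  rw [← integral_prod _ (FF_int k m), integral_prod_symm _ (FF_int k m)]
  have : ∫ s, ∫ v, FF k m (v, s) ∂mu1 ∂mu1 = ∫ s, BB k m * (s^(2*k+1+2*m) * (-Real.log s)) ∂mu1 := by
    apply integral_congr_ae
    filter_upwards [hae] with s hs
    exact FF_inner k m s hs
  rw [this, integral_const_mul, mu1, ← integral_Ioc_eq_integral_Ioo, ← intervalIntegral.integral_of_le zero_le_one, (int_neglog _).2]
  push_cast; rw [mul_one_div]; congr 2; ring

lemma vv_eq (k m : ℕ) : vv (k,m) = 8/(((k:ℝ)+1)^2 * cc k) * (BB k m / (2*k+2*m+2:ℝ)^2) := by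
  have h1 : cc k * ((k+1).factorial:ℝ)^2 = (2*(k+1)).factorial := by
    unfold cc
    have := Nat.choose_mul_factorial_mul_factorial (n := 2*(k+1)) (k := k+1) (by omega)
    rw [show 2*(k+1) - (k+1) = k+1 by omega] at this
    rw [← this]; push_cast; ring
  have h2 : ((2*(k+1)).factorial:ℝ) = 2*((k:ℝ)+1) * (2*k+1).factorial := by
    rw [show 2*(k+1) = (2*k+1)+1 by ring, Nat.factorial_succ]; push_cast; ring
  have h3 := cc_pos k
  unfold vv BB
  simp only []
  rw [show 2*k+1+m+1 = 2*k+m+2 by ring]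
  have h4 : ((k+1).factorial:ℝ)^2 = 2*((k:ℝ)+1) * (2*k+1).factorial / cc k := by
    rw [eq_div_iff h3.ne']; linarith
  rw [h4]
  have : ((2*k+m+2).factorial:ℝ) ≠ 0 := by positivity
  field_simp
  ring
end Z11
open Filter Topology MeasureTheory
namespace Z11

noncomputable def GG (v : ℝ) (m : ℕ) (s : ℝ) : ℝ := if v < s then (s - v)^m * hh m s else 0
noncomputable def Km (m : ℕ) (v : ℝ) : ℝ := ∫ s, GG v m s ∂mu1
noncomputable def KK (v : ℝ) : ℝ := ∫ s in Set.Ioo v 1, -Real.log s / (s * (1 - v*s + s^2))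

lemma FF_GG (k m : ℕ) (v s : ℝ) : FF k m (v, s) = v^(2*k+1) * GG v m s := by
  unfold FF GG; split_ifs <;> ring

lemma GG_bound (v : ℝ) (hv : v ∈ Set.Ioo (0:ℝ) 1) (m : ℕ) (s : ℝ) (hs : s ∈ Set.Ioo (0:ℝ) 1) :
    0 ≤ GG v m s ∧ GG v m s ≤ (1-v)^m * (1/v^2) := by
  have hv0 := hv.1
  have hv1 : 0 < 1 - v := by linarith [hv.2]
  have hs0 := hs.1
  unfold GG
  split_ifs with h
  · have h1 : 0 ≤ s - v := by linarith
    have hl : -Real.log s ≤ 1/s := by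
      have := Real.one_sub_inv_le_log_of_pos hs0
      rw [one_div]; linarith
    have hl0 : 0 ≤ -Real.log s := by linarith [Real.log_nonpos hs.1.le hs.2.le]
    have e : (s-v)^m * hh m s = ((s-v)*s)^m * (-Real.log s / s) := by unfold hh; rw [mul_pow]; ring
    rw [e]
    refine ⟨by positivity, ?_⟩
    have h2 : (s-v)*s ≤ 1 - v := by nlinarith [hs.2]
    have h3 : -Real.log s / s ≤ 1/v^2 := by
      calc -Real.log s / s ≤ (1/s)/s := by gcongr
        _ = 1/s^2 := by field_simp
        _ ≤ 1/v^2 := by gcongr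
    gcongr
  · exact ⟨le_rfl, by positivity⟩

lemma measurable_GG (v : ℝ) (m : ℕ) : Measurable (GG v m) := by
  unfold GG
  have := measurable_hh m
  refine Measurable.ite (measurableSet_lt measurable_const measurable_id) ?_ measurable_const
  fun_prop

lemma ae_mu1 : ∀ᵐ s ∂mu1, s ∈ Set.Ioo (0:ℝ) 1 := ae_restrict_mem measurableSet_Ioo

lemma GG_int (v : ℝ) (hv : v ∈ Set.Ioo (0:ℝ) 1) (m : ℕ) : Integrable (GG v m) mu1 := by
  refine Integrable.of_bound (measurable_GG v m).aestronglyMeasurable ((1-v)^m * (1/v^2)) ?_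
  filter_upwards [ae_mu1] with s hs
  have := GG_bound v hv m s hs
  rw [Real.norm_of_nonneg this.1]; exact this.2

lemma Km_nonneg (v : ℝ) (hv : v ∈ Set.Ioo (0:ℝ) 1) (m : ℕ) : 0 ≤ Km m v := by
  apply integral_nonneg_of_ae
  filter_upwards [ae_mu1] with s hs
  exact (GG_bound v hv m s hs).1

lemma Km_le (v : ℝ) (hv : v ∈ Set.Ioo (0:ℝ) 1) (m : ℕ) : Km m v ≤ (1-v)^m * (1/v^2) := by
  have : ∫ s, GG v m s ∂mu1 ≤ ∫ s, (1-v)^m * (1/v^2) ∂mu1 := by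
    apply integral_mono_ae (GG_int v hv m) (integrable_const _)
    filter_upwards [ae_mu1] with s hs
    exact (GG_bound v hv m s hs).2
  refine this.trans (le_of_eq ?_)
  rw [integral_const]
  simp [mu1, Measure.real]

lemma summable_Km (v : ℝ) (hv : v ∈ Set.Ioo (0:ℝ) 1) : Summable (fun m => Km m v) := by
  refine Summable.of_nonneg_of_le (Km_nonneg v hv) (Km_le v hv) ?_
  exact (summable_geometric_of_lt_one (by linarith [hv.2]) (by linarith [hv.1])).mul_right _

lemma hasSum_Km (v : ℝ) (hv : v ∈ Set.Ioo (0:ℝ) 1) : HasSum (fun m => (-1)^m * Km m v) (KK v) := by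
  have hn : ∀ m, ∫ s, ‖(-1)^m * GG v m s‖ ∂mu1 = Km m v := by
    intro m
    apply integral_congr_ae
    filter_upwards [ae_mu1] with s hs
    rw [norm_mul, norm_pow, norm_neg, norm_one, one_pow, one_mul, Real.norm_of_nonneg (GG_bound v hv m s hs).1]
  have h := hasSum_integral_of_summable_integral_norm (μ := mu1) (F := fun m s => (-1)^m * GG v m s) (fun m => (GG_int v hv m).const_mul _)
    (by simp only [hn]; exact summable_Km v hv)
  simp only [integral_const_mul] at h
  refine hs_congr h (fun m => rfl) ?_
  have h1 : ∫ s, ∑' m, (-1)^m * GG v m s ∂mu1 = ∫ s, (Set.Ioi v).indicator (fun s => -Real.log s / (s * (1 - v*s + s^2))) s ∂mu1 := by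
    apply integral_congr_ae
    filter_upwards [ae_mu1] with s hs
    have hs0 := hs.1
    simp only [Set.indicator, Set.mem_Ioi, GG]
    split_ifs with h
    · have h2 : (s-v)*s < 1 := by nlinarith [hs.2, hv.1]
      have h3 : 0 ≤ (s-v)*s := mul_nonneg (by linarith) hs0.le
      have h4 := (hasSum_geometric_of_abs_lt_one (r := -((s-v)*s)) (by rw [abs_neg, abs_of_nonneg h3]; exact h2)).mul_right (-Real.log s / s)
      refine (hs_congr h4 (fun m => ?_) ?_).tsum_eq
      · rw [neg_pow ((s-v)*s), mul_pow]; unfold hh; ring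
      · have : 1 - v*s + s^2 ≠ 0 := by nlinarith
        have h5 : 1 - -((s-v)*s) = 1 - v*s+s^2 := by ring
        rw [h5]; field_simp
    · simp
  rw [h1, mu1, setIntegral_indicator measurableSet_Ioi]
  unfold KK
  congr 2
  ext x; simp only [Set.mem_inter_iff, Set.mem_Ioo, Set.mem_Ioi]
  constructor
  · rintro ⟨a, b⟩; exact ⟨⟨hv.1.trans a, b⟩, a⟩
  · rintro ⟨⟨a, b⟩, c⟩; exact ⟨c, b⟩

lemma V_int : V = ∫ x in Set.Ioo 0 (Real.pi/6), 16 * x^2 * (Real.cos x / Real.sin x) * KK (2 * Real.sin x) := by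
  have hp := Real.pi_pos
  set f : ℕ × ℕ → ℝ → ℝ := fun p v => 8/(((p.1:ℝ)+1)^2 * cc p.1) * ((-1)^p.2 * ∫ s, FF p.1 p.2 (v, s) ∂mu1) with hf
  have hintg : ∀ p, Integrable (f p) mu1 := by
    intro p
    exact (((FF_int p.1 p.2).integral_prod_left).const_mul _).const_mul _
  have hval : ∀ p, ∫ v, f p v ∂mu1 = (-1)^p.2 * vv p := by
    intro p
    simp only [hf]
    rw [integral_const_mul, integral_const_mul, FF_val, show vv p = vv (p.1,p.2) from rfl, vv_eq]; ring
  have hnorm : ∀ p, ∫ v, ‖f p v‖ ∂mu1 = vv p := by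
    intro p
    have : ∫ v, ‖f p v‖ ∂mu1 = ∫ v, 8/(((p.1:ℝ)+1)^2 * cc p.1) * ∫ s, FF p.1 p.2 (v, s) ∂mu1 ∂mu1 := by
      apply integral_congr_ae
      filter_upwards [ae_mu1] with v hv
      have h1 : 0 ≤ ∫ s, FF p.1 p.2 (v, s) ∂mu1 := by
        apply integral_nonneg_of_ae
        filter_upwards [ae_mu1] with s hs
        exact FF_nonneg _ _ v s hv hs
      have h2 := cc_pos p.1
      simp only [hf]
      rw [norm_mul, norm_mul, norm_pow, norm_neg, norm_one, one_pow, one_mul, Real.norm_of_nonneg h1, Real.norm_of_nonneg (by positivity)]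
    rw [this, integral_const_mul, FF_val, show vv p = vv (p.1,p.2) from rfl, vv_eq]
  have h := hasSum_integral_of_summable_integral_norm hintg (by simp only [hnorm]; exact summable_vv)
  simp only [hval] at h
  rw [hasSum_V.unique h, mu1, change_v]
  apply setIntegral_congr_fun measurableSet_Ioo
  intro x hx
  have hs : 0 < Real.sin x := Real.sin_pos_of_pos_of_lt_pi hx.1 (by linarith [hx.2])
  have hvm : 2 * Real.sin x ∈ Set.Ioo (0:ℝ) 1 := by rw [← image_v]; exact ⟨x, hx, rfl⟩
  have h1 := (hasSum_arcsin x ⟨hx.1.le, hx.2.le⟩).mul_left (8 / (2 * Real.sin x))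
  have h2 : HasSum (fun k : ℕ => 8/(((k:ℝ)+1)^2 * cc k) * (2*Real.sin x)^(2*k+1)) (8 / (2 * Real.sin x) * (2*x^2)) := by
    refine hs_congr h1 (fun k => ?_) rfl
    have := cc_pos k
    rw [show 2*(k+1) = (2*k+1)+1 by ring, pow_succ _ (2*k+1)]
    field_simp
  have h3 := hasSum_Km _ hvm
  have h4 : Summable (fun p : ℕ × ℕ => 8/(((p.1:ℝ)+1)^2 * cc p.1) * (2*Real.sin x)^(2*p.1+1) * ((-1)^p.2 * Km p.2 (2*Real.sin x))) := by
    apply Summable.of_norm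
    have h5 := h2.summable.mul_of_nonneg (summable_Km _ hvm) (fun k => by have := cc_pos k; positivity) (Km_nonneg _ hvm)
    refine h5.congr fun p => ?_
    have := cc_pos p.1
    rw [norm_mul, norm_mul, norm_mul, norm_pow ((-1:ℝ)), norm_neg, norm_one, one_pow, one_mul, Real.norm_of_nonneg (Km_nonneg _ hvm _), Real.norm_of_nonneg (by positivity),  Real.norm_of_nonneg (by positivity)]
  have h6 := h2.mul h3 h4
  have h7 : HasSum (fun p => f p (2*Real.sin x)) (8 / (2 * Real.sin x) * (2*x^2) * KK (2*Real.sin x)) := by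
    refine hs_congr h6 (fun p => ?_) rfl
    simp only [hf, FF_GG, integral_const_mul, Km]; ring
  simp only []
  rw [h7.tsum_eq]; field_simp; ring
end Z11
open Filter Topology MeasureTheory
namespace Z11

lemma exists_Dl : ∃ D : ℂ → ℂ, ∀ w ∈ DD, HasDerivAt D (-Complex.log w / (1-w)) w := by
  have : DifferentiableOn ℂ (fun w => -Complex.log w / (1-w)) DD := by
    intro w hw
    obtain ⟨hs, hs'⟩ := DD_slit w hw
    have h0 := Complex.slitPlane_ne_zero hs'
    have h1 : DifferentiableAt ℂ (fun w => Complex.log w) w := Complex.differentiableAt_log hs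
    exact (h1.neg.div (by fun_prop) h0).differentiableWithinAt
  exact this.isExactOn_ball

noncomputable def Lam (D : ℂ → ℂ) (x : ℝ) : ℂ := D (ee (-1*x+Real.pi/2)) - D (1 - ee (-2*x+0)) +
  ((Real.pi/2 - x : ℝ):ℂ) * Complex.I * (-Complex.log (1 - ee (-1*x+Real.pi/2)) + ((-2*x:ℝ):ℂ) * Complex.I)

lemma hasDerivAt_ofReal_lin (c d t : ℝ) : HasDerivAt (fun t : ℝ => ((c*t+d : ℝ) : ℂ)) (c:ℂ) t := by
  have : HasDerivAt (fun t : ℝ => c*t+d) c t := by simpa using ((hasDerivAt_id t).const_mul c).add_const d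
  exact this.ofReal_comp

lemma hasDerivAt_Lam (D : ℂ → ℂ) (hD : ∀ w ∈ DD, HasDerivAt D (-Complex.log w / (1-w)) w) (x : ℝ) (h0 : 0 < x) (h1 : x ≤ Real.pi/6) :
    HasDerivAt (Lam D) ((((Real.pi - 6*x)/4 : ℝ):ℂ) + ((2 * el x + el (Real.pi/4 - x/2) : ℝ):ℂ) * Complex.I) x := by
  have hp := Real.pi_pos
  have hm1 : ee (-1*x+Real.pi/2) ∈ DD := by
    have := ee_mem (Real.pi/4 - x/2) (by linarith) (by linarith)
    rwa [show 2*(Real.pi/4-x/2) = -1*x+Real.pi/2 by ring] at this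
  have hm2 : 1 - ee (-2*x+0) ∈ DD := by rw [add_zero]; exact ee_mem' x h0 (by linarith)
  have hl1 : Complex.log (ee (-1*x+Real.pi/2)) = ((Real.pi/2-x:ℝ):ℂ) * Complex.I := by
    rw [ee_log _ (by linarith) (by linarith)]; congr 2; ring
  have hl2 : Complex.log (1 - ee (-2*x+0)) = el x + ((Real.pi/2 - x : ℝ):ℂ) * Complex.I := by
    rw [add_zero]; exact log_one_sub_neg x h0 (by linarith)
  have hl3 : Complex.log (1 - ee (-1*x+Real.pi/2)) = el (Real.pi/4-x/2) - ((Real.pi/4+x/2 : ℝ):ℂ) * Complex.I := by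
    have := log_one_sub (Real.pi/4 - x/2) (by linarith) (by linarith)
    rw [show 2*(Real.pi/4-x/2) = -1*x+Real.pi/2 by ring] at this
    rw [this]; congr 3; ring
  have hs1 := (DD_slit _ hm1).2
  have hn1 := Complex.slitPlane_ne_zero hs1
  have d1 := (hD _ hm1).comp_of_eq x (hasDerivAt_ee (-1) (Real.pi/2) x) rfl
  have d2 := (hD _ hm2).comp_of_eq x ((hasDerivAt_ee (-2) 0 x).const_sub 1) rfl
  have d3 := ((hasDerivAt_ee (-1) (Real.pi/2) x).const_sub 1).clog_real hs1
  have d4 := (hasDerivAt_ofReal_lin (-1) (Real.pi/2) x).mul_const Complex.I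
  have d5 := (hasDerivAt_ofReal_lin (-2) 0 x).mul_const Complex.I
  have d := (d1.sub d2).add (d4.mul (d3.neg.add d5))
  have he := ee_ne (-2*x+0)
  have hfun : ∀ y, Lam D y = (((D ∘ fun t : ℝ => ee (-1 * t + Real.pi / 2)) - D ∘ fun x : ℝ => 1 - ee (-2 * x + 0)) +
      (fun y : ℝ => ((-1 * y + Real.pi / 2 : ℝ):ℂ) * Complex.I) *
        ((-fun t : ℝ => Complex.log (1 - ee (-1 * t + Real.pi / 2))) + fun y : ℝ => ((-2 * y + 0 : ℝ):ℂ) * Complex.I)) y := by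
    intro y
    simp only [Lam, Function.comp, Pi.add_apply, Pi.sub_apply, Pi.mul_apply, Pi.neg_apply]
    push_cast; ring
  refine (HasDerivAt.congr_of_eventuallyEq d (Eventually.of_forall hfun)).congr_deriv ?_
  rw [sub_sub_cancel, hl1, hl2]
  simp only [Pi.add_apply, Pi.neg_apply]
  rw [hl3]
  set q := ee (-1*x+Real.pi/2)
  set r := ee (-2*x+0)
  have hI := Complex.I_sq
  push_cast
  field_simp
  ring_nf
  simp only [hI, show Complex.I^3 = -Complex.I by rw [pow_succ, hI]; ring, show Complex.I^4 = 1 by rw [show 4 = 2*2 by norm_num, pow_mul, hI]; norm_num]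
  ring

noncomputable def Nn (x : ℝ) : ℝ := ∫ t in (Real.pi/6)..x, (2 * el t + el (Real.pi/4 - t/2))

lemma el_pi_six : el (Real.pi/6) = 0 := by unfold el; rw [Real.sin_pi_div_six]; norm_num

lemma Lam_pi_six (D : ℂ → ℂ) : Lam D (Real.pi/6) = 0 := by
  have hp := Real.pi_pos
  have eω : 1 - ee (-2*(Real.pi/6)+0) = ee (-1*(Real.pi/6)+Real.pi/2) := by
    rw [add_zero, ee_one_sub_neg, Real.sin_pi_div_six]; norm_num
    congr 1; ring
  have h := log_one_sub (Real.pi/6) (by linarith) (by linarith)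
  rw [show 2*(Real.pi/6) = -1*(Real.pi/6)+Real.pi/2 by ring, el_pi_six] at h
  unfold Lam
  rw [eω, h]
  push_cast; ring

lemma continuousOn_el : ContinuousOn el (Set.Ioo 0 Real.pi) := by
  intro x hx
  exact (hasDerivAt_el x (Real.sin_pos_of_pos_of_lt_pi hx.1 hx.2).ne').continuousAt.continuousWithinAt

lemma Lam_eq (D : ℂ → ℂ) (hD : ∀ w ∈ DD, HasDerivAt D (-Complex.log w / (1-w)) w) (x : ℝ) (h0 : 0 < x) (h1 : x ≤ Real.pi/6) :
    (Lam D x).re = -(Real.pi - 6*x)^2/48 ∧ (Lam D x).im = Nn x := by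
  have hp := Real.pi_pos
  have hsub : ∀ t ∈ Set.uIcc (Real.pi/6) x, x ≤ t ∧ t ≤ Real.pi/6 := by
    intro t ht; rw [Set.uIcc_of_ge h1] at ht; exact ht
  constructor
  · have h := intervalIntegral.integral_eq_sub_of_hasDerivAt (a := Real.pi/6) (b := x)
      (f := fun t => (Lam D t).re + (Real.pi-6*t)^2/48) (f' := fun t => 0) (fun t ht => by
        have ht := hsub t ht
        have d1 := Complex.reCLM.hasFDerivAt.comp_hasDerivAt t (hasDerivAt_Lam D hD t (by linarith) ht.2)
        have d2 : HasDerivAt (fun t : ℝ => (Real.pi-6*t)^2/48) (-(Real.pi-6*t)/4) t := by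
          have := ((((hasDerivAt_id t).const_mul 6).const_sub Real.pi).pow 2).div_const 48
          exact hd_congr this (fun y => rfl) (by simp; ring)
        refine hd_congr (d1.add d2) (fun y => rfl) ?_
        simp only [Complex.reCLM_apply, Complex.add_re, Complex.ofReal_re, Complex.re_ofReal_mul, Complex.I_re]
        ring) (by simp)
    simp [Lam_pi_six] at h
    have e : Real.pi - 6*(Real.pi/6) = 0 := by ring
    rw [e] at h
    norm_num at h
    linarith
  · unfold Nn
    rw [intervalIntegral.integral_eq_sub_of_hasDerivAt (f := fun t => (Lam D t).im)]
    · simp [Lam_pi_six]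
    · intro t ht
      have ht := hsub t ht
      have d1 := Complex.imCLM.hasFDerivAt.comp_hasDerivAt t (hasDerivAt_Lam D hD t (by linarith) ht.2)
      refine hd_congr d1 (fun y => rfl) ?_
      simp only [Complex.imCLM_apply, Complex.add_im, Complex.ofReal_im, Complex.im_ofReal_mul, Complex.I_im]
      ring
    · apply ContinuousOn.intervalIntegrable
      apply ContinuousOn.add
      · apply ContinuousOn.mul continuousOn_const
        refine continuousOn_el.mono fun t ht => ?_
        have ht := hsub t ht
        exact ⟨by linarith, by linarith⟩
      · refine continuousOn_el.comp (by fun_prop) fun t ht => ?_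
        have ht := hsub t ht
        exact ⟨by linarith, by linarith⟩
end Z11
open Filter Topology MeasureTheory
namespace Z11

noncomputable def PP (D : ℂ → ℂ) (x : ℝ) (s : ℝ) : ℂ := D ((s:ℂ) * ee (-1*x+Real.pi/2)) -
  ((Real.pi/2 - x : ℝ):ℂ) * Complex.I * Complex.log (1 - (s:ℂ) * ee (-1*x+Real.pi/2))

lemma two_sin_lt (x : ℝ) (h0 : 0 < x) (h1 : x < Real.pi/6) : 0 < 2*Real.sin x ∧ 2*Real.sin x < 1 ∧ 0 < Real.cos x := by
  have hp := Real.pi_pos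
  have h2 := Real.sin_pos_of_pos_of_lt_pi h0 (by linarith)
  have h3 : Real.sin x < Real.sin (Real.pi/6) := Real.sin_lt_sin_of_lt_of_le_pi_div_two (by linarith) (by linarith) h1
  rw [Real.sin_pi_div_six] at h3
  exact ⟨by linarith, by linarith, Real.cos_pos_of_mem_Ioo ⟨by linarith, by linarith⟩⟩

lemma ee_re' (x : ℝ) : (ee (-1*x+Real.pi/2)).re = Real.sin x := by
  rw [ee_re, show -1*x+Real.pi/2 = Real.pi/2 - x by ring, Real.cos_pi_div_two_sub]
lemma ee_im' (x : ℝ) : (ee (-1*x+Real.pi/2)).im = Real.cos x := by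
  rw [ee_im, show -1*x+Real.pi/2 = Real.pi/2 - x by ring, Real.sin_pi_div_two_sub]

lemma hasDerivAt_PP (D : ℂ → ℂ) (hD : ∀ w ∈ DD, HasDerivAt D (-Complex.log w / (1-w)) w) (x s : ℝ) (h0 : 0 < x) (h1 : x < Real.pi/6)
    (hs0 : 0 < s) (hs1 : s ≤ 1) :
    HasDerivAt (PP D x) (((-Real.log s / (1 - 2*Real.sin x*s + s^2) : ℝ) : ℂ) * (((Real.sin x - s : ℝ) : ℂ) + (Real.cos x : ℝ) * Complex.I)) s := by
  have hp := Real.pi_pos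
  obtain ⟨hv0, hv1, hc⟩ := two_sin_lt x h0 h1
  have hsc := Real.sin_sq_add_cos_sq x
  have hQ : 0 < 1 - 2*Real.sin x*s + s^2 := by nlinarith
  have hre := ee_re' x
  have him := ee_im' x
  have hl := ee_log (-1*x+Real.pi/2) (by linarith) (by linarith)
  set e := ee (-1*x+Real.pi/2) with he
  have hsl := (sin_lt_two_cos x h0 (by linarith)).2
  have hm : (s:ℂ) * e ∈ DD := by
    rw [mem_DD, Complex.re_ofReal_mul, Complex.im_ofReal_mul, hre, him]
    have : s * 1 < Real.sin x + 2 * Real.cos x := by nlinarith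
    nlinarith
  have hlog : Complex.log ((s:ℂ) * e) = (Real.log s : ℝ) + ((Real.pi/2 - x:ℝ):ℂ) * Complex.I := by
    rw [Complex.log_ofReal_mul hs0 (ee_ne _), hl]; push_cast; ring
  have hs1' := (DD_slit _ hm).2
  have hn1 := Complex.slitPlane_ne_zero hs1'
  have d0 : HasDerivAt (fun s : ℝ => (s:ℂ) * e) e s := by
    have := (HasDerivAt.ofReal_comp (hasDerivAt_id s)).mul_const e
    simpa using this
  have d1 := (hD _ hm).comp_of_eq s d0 rfl
  have d3 := (d0.const_sub 1).clog_real hs1'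
  have d := d1.sub (d3.const_mul (((Real.pi/2 - x : ℝ):ℂ) * Complex.I))
  refine (HasDerivAt.congr_of_eventuallyEq d (Eventually.of_forall fun y => rfl)).congr_deriv ?_
  rw [hlog]
  have hee : e = (Real.sin x : ℝ) + (Real.cos x : ℝ) * Complex.I := by
    apply Complex.ext <;> simp only [Complex.add_re, Complex.add_im, Complex.ofReal_re, Complex.ofReal_im, Complex.re_ofReal_mul, Complex.im_ofReal_mul, Complex.I_re, Complex.I_im, hre, him] <;> ring
  have hQc : ((1 - 2*Real.sin x*s + s^2 : ℝ) : ℂ) ≠ 0 := by exact_mod_cast hQ.ne'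
  have key : e / (1 - s*e) = (((Real.sin x - s : ℝ) : ℂ) + (Real.cos x : ℝ) * Complex.I) / ((1 - 2*Real.sin x*s + s^2 : ℝ) : ℂ) := by
    rw [div_eq_div_iff hn1 hQc, hee]
    have hscC : ((Real.sin x : ℝ):ℂ)^2 + ((Real.cos x:ℝ):ℂ)^2 = 1 := by exact_mod_cast hsc
    have hI := Complex.I_sq
    rw [Complex.ofReal_sub, Complex.ofReal_add, Complex.ofReal_sub, Complex.ofReal_mul, Complex.ofReal_mul, Complex.ofReal_pow]
    push_cast [-Complex.ofReal_sin, -Complex.ofReal_cos]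
    set S := ((Real.sin x : ℝ):ℂ)
    set C := ((Real.cos x : ℝ):ℂ)
    linear_combination (-(s:ℂ)) * hscC + (s * C^2) * hI
  calc _ = -((Real.log s : ℝ):ℂ) * (e / (1 - s*e)) := by field_simp; ring
    _ = _ := by rw [key]; push_cast [-Complex.ofReal_sin, -Complex.ofReal_cos]; field_simp

lemma PP_sub (D : ℂ → ℂ) (x : ℝ) (h0 : 0 < x) (h1 : x < Real.pi/6) :
    PP D x 1 - PP D x (2*Real.sin x) = Lam D x := by
  have hp := Real.pi_pos
  have h : ((2*Real.sin x:ℝ):ℂ) * ee (-1*x+Real.pi/2) = 1 - ee (-2*x+0) := by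
    rw [add_zero, ee_one_sub_neg]; congr 2; ring
  unfold PP Lam
  rw [h, sub_sub_cancel, ee_log _ (by linarith) (by linarith)]
  push_cast
  ring

lemma KK_eq (x : ℝ) (h0 : 0 < x) (h1 : x < Real.pi/6) :
    KK (2*Real.sin x) = 1/2 * el x^2 - (Real.pi-6*x)^2/48 + Real.tan x * Nn x := by
  obtain ⟨D, hD⟩ := exists_Dl
  obtain ⟨hv0, hv1, hc⟩ := two_sin_lt x h0 h1
  obtain ⟨e1, e2⟩ := Lam_eq D hD x h0 h1.le
  have hs := PP_sub D x h0 h1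
  have hsub : ∀ t ∈ Set.uIcc (2*Real.sin x) 1, 0 < t ∧ t ≤ 1 := by
    intro t ht; rw [Set.uIcc_of_le hv1.le] at ht; exact ⟨by linarith [ht.1], ht.2⟩
  unfold KK
  rw [← integral_Ioc_eq_integral_Ioo, ← intervalIntegral.integral_of_le hv1.le,
    intervalIntegral.integral_eq_sub_of_hasDerivAt (f := fun s => -(1/2) * Real.log s^2 + (PP D x s).re + Real.tan x * (PP D x s).im)]
  · have r1 := congrArg Complex.re hs
    have r2 := congrArg Complex.im hs
    rw [Complex.sub_re] at r1
    rw [Complex.sub_im] at r2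
    simp only [Real.log_one]
    rw [← e2, ← r2]
    unfold el
    linear_combination r1 + e1
  · intro s hs
    obtain ⟨s0, s1⟩ := hsub s hs
    have dP := hasDerivAt_PP D hD x s h0 h1 s0 s1
    have dr := Complex.reCLM.hasFDerivAt.comp_hasDerivAt s dP
    have di := (Complex.imCLM.hasFDerivAt.comp_hasDerivAt s dP).const_mul (Real.tan x)
    have dl := ((Real.hasDerivAt_log s0.ne').pow 2).const_mul (-(1/2))
    refine hd_congr ((dl.add dr).add di) (fun y => rfl) ?_
    simp only [Complex.reCLM_apply, Complex.imCLM_apply, Complex.re_ofReal_mul, Complex.im_ofReal_mul, Complex.add_re, Complex.add_im, Complex.ofReal_re, Complex.ofReal_im, Complex.I_re, Complex.I_im]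
    have hQ : 0 < 1 - 2*Real.sin x*s + s^2 := by nlinarith
    rw [Real.tan_eq_sin_div_cos]
    obtain ⟨Q, hQe⟩ : ∃ Q, Q = 1 - 2*Real.sin x*s + s^2 := ⟨_, rfl⟩
    rw [← hQe] at hQ ⊢
    have hne := hQ.ne'
    have e3 : Real.sin x / Real.cos x * (-Real.log s / Q * (0 + (Real.cos x * 1))) = -Real.log s / Q * Real.sin x := by
      field_simp; ring
    have e4 : -Real.log s / (s * Q) = -Real.log s / Q * (Real.sin x - s) + -Real.log s / Q * Real.sin x - Real.log s / s := by
      field_simp; rw [hQe]; ring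
    rw [e4]
    norm_num
    field_simp
    ring
  · apply ContinuousOn.intervalIntegrable
    apply ContinuousOn.div
    · exact (Real.continuousOn_log.mono fun t ht => by simpa using (hsub t ht).1.ne').neg
    · fun_prop
    · intro s hs
      obtain ⟨s0, s1⟩ := hsub s hs
      have hQ : 0 < 1 - 2*Real.sin x*s + s^2 := by nlinarith
      positivity
end Z11
open Filter Topology MeasureTheory
namespace Z11

lemma ii_lam (a b : ℝ) (ha : 0 ≤ a) (ha' : a ≤ Real.pi/6) (hb : 0 ≤ b) (hb' : b ≤ Real.pi/6) :
    ContinuousOn (fun t => el (Real.pi/4 - t/2)) (Set.uIcc a b) := by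
  have hp := Real.pi_pos
  refine continuousOn_el.comp (by fun_prop) fun t ht => ?_
  rw [Set.mem_uIcc] at ht
  constructor <;> rcases ht with ht | ht <;> linarith [ht.1, ht.2]

lemma ii_nn (a b : ℝ) (ha : 0 ≤ a) (ha' : a ≤ Real.pi/6) (hb : 0 ≤ b) (hb' : b ≤ Real.pi/6) :
    IntervalIntegrable (fun t => 2 * el t + el (Real.pi/4 - t/2)) volume a b :=
  ((intervalIntegrable_el a b).const_mul 2).add (ii_lam a b ha ha' hb hb').intervalIntegrable

lemma hasDerivAt_Nn (x : ℝ) (h0 : 0 < x) (h1 : x < Real.pi/6) :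
    HasDerivAt Nn (2 * el x + el (Real.pi/4 - x/2)) x := by
  have hp := Real.pi_pos
  apply intervalIntegral.integral_hasDerivAt_right (ii_nn _ _ (by linarith) le_rfl h0.le h1.le)
  · apply StronglyMeasurable.stronglyMeasurableAtFilter
    apply Measurable.stronglyMeasurable
    unfold el; fun_prop
  · have c1 : ContinuousAt el x := continuousOn_el.continuousAt (Ioo_mem_nhds h0 (by linarith))
    have c2 : ContinuousAt (fun t => el (Real.pi/4 - t/2)) x := by
      apply ContinuousAt.comp' (f := fun t : ℝ => Real.pi/4 - t/2)
      · exact continuousOn_el.continuousAt (Ioo_mem_nhds (by linarith) (by linarith))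
      · fun_prop
    exact (c1.const_mul 2).add c2

lemma continuousOn_Nn : ContinuousOn Nn (Set.Icc 0 (Real.pi/6)) := by
  have hp := Real.pi_pos
  have := intervalIntegral.continuousOn_primitive_interval' (a := Real.pi/6) (ii_nn 0 (Real.pi/6) le_rfl (by linarith) (by linarith) le_rfl) (by simp)
  rwa [Set.uIcc_of_le (by linarith)] at this

lemma int_x2Nn : ∫ x in (0:ℝ)..(Real.pi/6), x^2 * Nn x = -(1/3) * ∫ x in (0:ℝ)..(Real.pi/6), x^3 * (2 * el x + el (Real.pi/4 - x/2)) := by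
  have hp := Real.pi_pos
  have hle : (0:ℝ) ≤ Real.pi/6 := by linarith
  have i1 : IntervalIntegrable (fun x => x^2 * Nn x) volume 0 (Real.pi/6) := by
    apply ContinuousOn.intervalIntegrable_of_Icc hle
    exact (by fun_prop : Continuous fun x : ℝ => x^2).continuousOn.mul continuousOn_Nn
  have i2 : IntervalIntegrable (fun x => x^3 * (2 * el x + el (Real.pi/4 - x/2))) volume 0 (Real.pi/6) :=
    (ii_nn 0 (Real.pi/6) le_rfl hle hle le_rfl).continuousOn_mul (by fun_prop)
  have h := intervalIntegral.integral_eq_sub_of_hasDerivAt_of_le (f := fun x => x^3/3 * Nn x)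
    (f' := fun x => x^2 * Nn x + (1/3) * (x^3 * (2 * el x + el (Real.pi/4 - x/2)))) hle
    ((by fun_prop : Continuous fun x : ℝ => x^3/3).continuousOn.mul continuousOn_Nn)
    (fun x hx => by
      have d1 := ((hasDerivAt_pow 3 x).div_const 3).mul (hasDerivAt_Nn x hx.1 hx.2)
      refine hd_congr d1 (fun _ => rfl) ?_
      norm_num; ring) (i1.add (i2.const_mul _))
  rw [intervalIntegral.integral_add i1 (i2.const_mul _), intervalIntegral.integral_const_mul] at h
  have : Nn (Real.pi/6) = 0 := by simp [Nn]
  rw [this] at h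
  norm_num at h
  linarith

lemma V_eq : V = g5 - (1/3) * (∫ x in (0:ℝ)..(Real.pi/6), x * (x * (Real.pi - 6*x)^2) * (Real.cos x / Real.sin x))
    - (16/3) * ∫ x in (0:ℝ)..(Real.pi/6), x^3 * (2 * el x + el (Real.pi/4 - x/2)) := by
  have hp := Real.pi_pos
  have hle : (0:ℝ) ≤ Real.pi/6 := by linarith
  have i1 : IntervalIntegrable (fun x => 8*x^2*el x^2*(Real.cos x/Real.sin x)) volume 0 (Real.pi/6) := by
    refine (contour.1.const_mul 8).congr fun x _ => ?_
    ring
  have i2 := intervalIntegrable_cot (fun x => x * (Real.pi - 6*x)^2) (by fun_prop) (Real.pi/6) hle (by linarith)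
  have i3 : IntervalIntegrable (fun x => x^2 * Nn x) volume 0 (Real.pi/6) := by
    apply ContinuousOn.intervalIntegrable_of_Icc hle
    exact (by fun_prop : Continuous fun x : ℝ => x^2).continuousOn.mul continuousOn_Nn
  have hg : g5 = ∫ x in (0:ℝ)..(Real.pi/6), 8*x^2*el x^2*(Real.cos x/Real.sin x) := by
    rw [g5_int, intervalIntegral.integral_of_le hle, integral_Ioc_eq_integral_Ioo]
  have hV : V = ∫ x in (0:ℝ)..(Real.pi/6), (8*x^2*el x^2*(Real.cos x/Real.sin x)
      - (1/3) * (x * (x * (Real.pi - 6*x)^2) * (Real.cos x / Real.sin x)) + 16 * (x^2 * Nn x)) := by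
    rw [V_int, intervalIntegral.integral_of_le hle, integral_Ioc_eq_integral_Ioo]
    apply setIntegral_congr_fun measurableSet_Ioo
    intro x hx
    obtain ⟨a1, a2, a3⟩ := two_sin_lt x hx.1 hx.2
    have a4 : Real.sin x ≠ 0 := by intro h; rw [h] at a1; simp at a1
    simp only
    rw [KK_eq x hx.1 hx.2, Real.tan_eq_sin_div_cos]
    field_simp
    ring
  rw [intervalIntegral.integral_add (i1.sub (i2.const_mul _)) (i3.const_mul _), intervalIntegral.integral_sub i1 (i2.const_mul _), intervalIntegral.integral_const_mul, intervalIntegral.integral_const_mul, int_x2Nn, ← hg] at hV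
  linarith
end Z11
open Filter Topology MeasureTheory
namespace Z11

lemma int_x3lam : ∫ x in (0:ℝ)..(Real.pi/6), x^3 * el (Real.pi/4 - x/2) =
    2 * ∫ x in (Real.pi/6)..(Real.pi/4), (Real.pi^3/8 + (-(3/2)*Real.pi^2)*x + 6*Real.pi*x^2 + (-8)*x^3 + 0*x^4) * el x := by
  have h := intervalIntegral.integral_comp_sub_mul (a := 0) (b := Real.pi/6) (c := (1/2:ℝ))
    (fun x => (Real.pi^3/8 + (-(3/2)*Real.pi^2)*x + 6*Real.pi*x^2 + (-8)*x^3 + 0*x^4) * el x) (by norm_num) (Real.pi/4)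
  rw [show Real.pi/4 - 1/2*(Real.pi/6) = Real.pi/6 by ring, show Real.pi/4 - 1/2*(0:ℝ) = Real.pi/4 by ring, smul_eq_mul,
    show ((1/2:ℝ))⁻¹ = 2 by norm_num] at h
  rw [← h]
  apply intervalIntegral.integral_congr
  intro x _
  simp only
  rw [show Real.pi/4 - 1/2*x = Real.pi/4 - x/2 by ring]
  ring

lemma hd_quartic (c2 c3 c4 x : ℝ) : HasDerivAt (fun x : ℝ => c2*x^2+c3*x^3+c4*x^4) (0+(2*c2)*x+(3*c3)*x^2+(4*c4)*x^3+0*x^4) x := by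
  have p : ∀ n : ℕ, HasDerivAt (fun x : ℝ => x^n) (n * x^(n-1)) x := fun n => hasDerivAt_pow n x
  refine hd_congr ((((p 2).const_mul c2).add ((p 3).const_mul c3)).add ((p 4).const_mul c4)) (fun _ => rfl) ?_
  norm_num; ring

lemma cot_quartic (c2 c3 c4 : ℝ) : ∫ x in (0:ℝ)..(Real.pi/6), x * (c2*x+c3*x^2+c4*x^3) * (Real.cos x / Real.sin x) =
    -(Ph 0 (2*c2) (3*c3) (4*c4) 0 (Real.pi/6) - Ph 0 (2*c2) (3*c3) (4*c4) 0 0) := by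
  have hp := Real.pi_pos
  have h := cot_by_parts (fun x => c2*x+c3*x^2+c4*x^3) (fun x => 0+(2*c2)*x+(3*c3)*x^2+(4*c4)*x^3+0*x^4) (by fun_prop) (by fun_prop)
    (fun x => hd_congr (hd_quartic c2 c3 c4 x) (fun y => by ring) rfl) (Real.pi/6) (by linarith) (by linarith)
  rw [h, el_pi_six, integral_poly_el _ _ _ _ _ _ _ le_rfl (by linarith) (by linarith)]
  ring

lemma final_value : 9*g5 - 2*V - 4*(Real.pi^2 * zeta 3 / 24 - 9/8 * zeta 5) - 15/8*zeta 5 =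
    29 * zeta 5 / 6 - Real.pi^2 * zeta 3 / 18 := by
  have hp := Real.pi_pos
  have hle : (0:ℝ) ≤ Real.pi/6 := by linarith
  have hg : g5 = 8 * ∫ x in (0:ℝ)..(Real.pi/6), x^2*el x^2*(Real.cos x/Real.sin x) := by
    rw [g5_int, intervalIntegral.integral_of_le hle, integral_Ioc_eq_integral_Ioo, ← integral_const_mul]
    congr 1; funext x; ring
  rw [contour.2] at hg
  have e1 : ∫ x in (0:ℝ)..(Real.pi/6), x^2 * (Real.pi/2-x)^2 * (Real.cos x / Real.sin x) =
      ∫ x in (0:ℝ)..(Real.pi/6), x * (Real.pi^2/4*x+(-Real.pi)*x^2+1*x^3) * (Real.cos x / Real.sin x) := by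
    congr 1; funext x; ring
  have e2 : ∫ x in (0:ℝ)..(Real.pi/6), x^2 * (Real.pi/2-x) * el x =
      ∫ x in (0:ℝ)..(Real.pi/6), (0+0*x+Real.pi/2*x^2+(-1)*x^3+0*x^4) * el x := by
    congr 1; funext x; ring
  have e3 : ∫ x in (0:ℝ)..(Real.pi/6), x * (x * (Real.pi - 6*x)^2) * (Real.cos x / Real.sin x) =
      ∫ x in (0:ℝ)..(Real.pi/6), x * (Real.pi^2*x+(-12*Real.pi)*x^2+36*x^3) * (Real.cos x / Real.sin x) := by
    congr 1; funext x; ring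
  have i1 : IntervalIntegrable (fun x => (0+0*x+0*x^2+2*x^3+0*x^4) * el x) volume 0 (Real.pi/6) :=
    (intervalIntegrable_el 0 (Real.pi/6)).continuousOn_mul (by fun_prop)
  have i2 : IntervalIntegrable (fun x => x^3 * el (Real.pi/4 - x/2)) volume 0 (Real.pi/6) :=
    ((by fun_prop : Continuous fun x : ℝ => x^3).continuousOn.mul (ii_lam _ _ le_rfl hle hle le_rfl)).intervalIntegrable
  have e4 : ∫ x in (0:ℝ)..(Real.pi/6), x^3 * (2 * el x + el (Real.pi/4 - x/2)) =
      (∫ x in (0:ℝ)..(Real.pi/6), (0+0*x+0*x^2+2*x^3+0*x^4) * el x) + ∫ x in (0:ℝ)..(Real.pi/6), x^3 * el (Real.pi/4 - x/2) := by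
    rw [← intervalIntegral.integral_add i1 i2]
    congr 1; funext x; ring
  have hV := V_eq
  rw [e4, int_x3lam, e3, cot_quartic, integral_poly_el _ _ _ _ _ _ _ le_rfl hle (by linarith),
    integral_poly_el _ _ _ _ _ _ _ hle (by linarith) (by linarith)] at hV
  rw [e1, e2, cot_quartic, integral_poly_el _ _ _ _ _ _ _ le_rfl hle (by linarith)] at hg
  rw [hV, hg]
  unfold Ph
  rw [Cn_zero, Cn_zero, Sn_zero, Sn_zero, Sn_zero, Cn_pi_six 3 (by norm_num), Cn_pi_six 5 (by norm_num), Cn_pi_four 3 (by norm_num), Cn_pi_four 5 (by norm_num)]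
  ring
end Z11
theorem stmt_11 :
    Tendsto (fun N => ∑ n ∈ Finset.range N,
      (-1:ℝ)^(n+1) / (((n:ℝ)+1)^3 * ((2*(n+1)).choose (n+1) : ℝ)) *
        (10 * A 2 (n+1) - (-1:ℝ)^(n+1) / ((n:ℝ)+1)^2))
      atTop (𝓝 (29 * zeta 5 / 6 - Real.pi^2 * zeta 3 / 18)) := by
  rw [← Z11.final_value]
  exact Z11.reduction _ Z11.hasSum_B
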